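/- There exists a constant C > 0 such that for every f ∈ H¹ the heat maximal function Mf belongs to L¹(ρ) and ‖Mf‖₁ ≤ C‖f‖_{H¹}. -/

import Mathlib

open MeasureTheory Real Filter Set
open scoped ENNReal

noncomputable section

/-- The group `G = ℝ² ⋊ ℝ⁺`, realized as triples `(x₁, x₂, a)` (only `a > 0` is relevant). -/
abbrev G : Type := ℝ × ℝ × ℝ

/-- Group product `(x₁,x₂,a)·(x₁',x₂',a') = (x₁+a x₁', x₂+a x₂', a a')`. -/
def gMul (x y : G) : G := (x.1 + x.2.2 * y.1, x.2.1 + x.2.2 * y.2.1, x.2.2 * y.2.2)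

/-- Group inverse `(x₁,x₂,a)⁻¹ = (−x₁/a, −x₂/a, 1/a)`. -/
def gInv (x : G) : G := (-x.1 / x.2.2, -x.2.1 / x.2.2, 1 / x.2.2)

/-- The identity `e = (0,0,1)`. -/
def gE : G := (0, 0, 1)

/-- The right Haar measure `dρ = a⁻¹ dx₁ dx₂ da` (supported where `a > 0`). -/
def ρG : Measure G :=
  (volume : Measure G).withDensity fun x => ENNReal.ofReal (if 0 < x.2.2 then x.2.2⁻¹ else 0)

/-- The modular function `δ(x₁,x₂,a) = a⁻²`. -/
def deltaG (x : G) : ℝ := (x.2.2 ^ 2)⁻¹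

/-- `|x| = √(x₁² + x₂²)`. -/
def normG (x : G) : ℝ := Real.sqrt (x.1 ^ 2 + x.2.1 ^ 2)

/-- `cosh r(x) = (a + a⁻¹ + a⁻¹|x|²)/2`. -/
def coshArg (x : G) : ℝ := (x.2.2 + x.2.2⁻¹ + x.2.2⁻¹ * (x.1 ^ 2 + x.2.1 ^ 2)) / 2

/-- `r(x) ≥ 0` is determined by `cosh r(x) = coshArg x`; explicitly `r = arcosh (coshArg x)`. -/
def rG (x : G) : ℝ := Real.log (coshArg x + Real.sqrt (coshArg x ^ 2 - 1))

/-- The left-invariant distance `d(x,y) = r(x⁻¹y)`. -/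
def dG (x y : G) : ℝ := rG (gMul (gInv x) y)

/-- The heat kernel
`p_t(x) = (8π^{3/2})⁻¹ δ(x)^{1/2} (r(x)/sinh r(x)) t^{−3/2} exp(−r(x)²/(4t))`,
with `r/sinh r := 1` at `x = e`. -/
def heatK (t : ℝ) (x : G) : ℝ :=
  (8 * Real.pi ^ ((3 : ℝ)/2))⁻¹ * Real.sqrt (deltaG x) *
    (if rG x = 0 then 1 else rG x / Real.sinh (rG x)) *
    t ^ (-(3 : ℝ)/2) * Real.exp (-(rG x ^ 2) / (4 * t))

/-- Convolution `f ∗ p_t(x) = ∫ f(xy⁻¹) p_t(y) dρ(y)`. -/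
def convHeat (f : G → ℝ) (t : ℝ) (x : G) : ℝ := ∫ y, f (gMul x (gInv y)) * heatK t y ∂ρG

/-- The heat maximal operator `Mf(x) = sup_{t>0} |f ∗ p_t(x)|` (valued in `ℝ≥0∞`). -/
def maxHeat (f : G → ℝ) (x : G) : ℝ≥0∞ :=
  ⨆ (t : ℝ) (_ : 0 < t), ENNReal.ofReal |convHeat f t x|

/-- Calderón–Zygmund sets. -/
def IsCZ (R : Set G) : Prop :=
  ∃ c : G, ∃ L r : ℝ, 0 < c.2.2 ∧ 0 < L ∧ 0 < r ∧
    R = Set.Icc (c.1 - L/2) (c.1 + L/2) ×ˢ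
        (Set.Icc (c.2.1 - L/2) (c.2.1 + L/2) ×ˢ
         Set.Icc (c.2.2 * Real.exp (-r)) (c.2.2 * Real.exp r)) ∧
    (r < 1 → Real.exp 2 * c.2.2 * r ≤ L ∧ L < Real.exp 8 * c.2.2 * r) ∧
    (1 ≤ r → c.2.2 * Real.exp (2*r) ≤ L ∧ L < c.2.2 * Real.exp (8*r))

/-- Atoms: `A ∈ L¹(ρ)` supported in a Calderón–Zygmund set `R`, with
`‖A‖_∞ ≤ ρ(R)⁻¹` and `∫ A dρ = 0`. -/
def IsAtomG (A : G → ℝ) : Prop :=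
  Integrable A ρG ∧
  ∃ R : Set G, IsCZ R ∧ (∀ x ∉ R, A x = 0) ∧
    eLpNorm A ⊤ ρG ≤ (ρG R)⁻¹ ∧
    ∫ x, A x ∂ρG = 0

/-- `f = Σ_j lam_j A_j` with atoms `A_j`, `Σ_j |lam_j| < ∞`, converging in `L¹(ρ)`. -/
def IsH1Decomp (f : G → ℝ) (lam : ℕ → ℝ) (A : ℕ → G → ℝ) : Prop :=
  (∀ j, IsAtomG (A j)) ∧ Summable (fun j => |lam j|) ∧
  Tendsto (fun N => eLpNorm (fun x => f x - ∑ j ∈ Finset.range N, lam j * A j x) 1 ρG)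
    atTop (nhds 0)

/-- The Hardy space `H¹`. -/
def MemH1 (f : G → ℝ) : Prop :=
  Integrable f ρG ∧ ∃ lam A, IsH1Decomp f lam A

/-- `‖f‖_{H¹} = inf Σ_j |lam_j|` over all atomic decompositions. -/
def H1norm (f : G → ℝ) : ℝ :=
  sInf {s | ∃ lam A, IsH1Decomp f lam A ∧ s = ∑' j, |lam j|}

/-- The left-invariant vector field `X₀ = a ∂_a`. -/
def X0 (f : G → ℝ) (x : G) : ℝ := x.2.2 * deriv (fun s => f (x.1, x.2.1, s)) x.2.2

/-- The left-invariant vector field `X₁ = a ∂_{x₁}`. -/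
def X1 (f : G → ℝ) (x : G) : ℝ := x.2.2 * deriv (fun s => f (s, x.2.1, x.2.2)) x.1

/-- The left-invariant vector field `X₂ = a ∂_{x₂}`. -/
def X2 (f : G → ℝ) (x : G) : ℝ := x.2.2 * deriv (fun s => f (x.1, s, x.2.2)) x.2.1

/-- `‖∇p_t(x)‖`, the Euclidean norm of `(X₀p_t, X₁p_t, X₂p_t)` at `x`. -/
def gradHeatNorm (t : ℝ) (x : G) : ℝ :=
  Real.sqrt (X0 (heatK t) x ^ 2 + X1 (heatK t) x ^ 2 + X2 (heatK t) x ^ 2)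

/-- The Poisson kernel `q_t(x) = π⁻² δ(x)^{1/2} (r(x)/sinh r(x)) · t/(t²+r(x)²)²`. -/
def poissonK (t : ℝ) (x : G) : ℝ :=
  (Real.pi ^ 2)⁻¹ * Real.sqrt (deltaG x) *
    (if rG x = 0 then 1 else rG x / Real.sinh (rG x)) *
    (t / (t ^ 2 + rG x ^ 2) ^ 2)

/-- Convolution `f ∗ q_t(x) = ∫ f(xy⁻¹) q_t(y) dρ(y)`. -/
def convPoisson (f : G → ℝ) (t : ℝ) (x : G) : ℝ := ∫ y, f (gMul x (gInv y)) * poissonK t y ∂ρG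

/-- The Poisson maximal operator `M̃f(x) = sup_{t>0} |f ∗ q_t(x)|`. -/
def maxPoisson (f : G → ℝ) (x : G) : ℝ≥0∞ :=
  ⨆ (t : ℝ) (_ : 0 < t), ENNReal.ofReal |convPoisson f t x|

/-- `G_{r₁}(x) = sup_{z ∈ B(x,r₁/2)} sup_{t>0} ‖∇p_t(z)‖`. -/
def Gsup (r1 : ℝ) (x : G) : ℝ≥0∞ :=
  ⨆ (z : G) (_ : 0 < z.2.2 ∧ dG x z < r1 / 2) (t : ℝ) (_ : 0 < t),
    ENNReal.ofReal (gradHeatNorm t z)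

/-- `R₀ = [−1,1]×[−1,1]×[e⁻¹,e]`. -/
def R0set : Set G :=
  Set.Icc (-1 : ℝ) 1 ×ˢ (Set.Icc (-1 : ℝ) 1 ×ˢ Set.Icc (Real.exp (-1)) (Real.exp 1))

/-- `R_L = [L−1,L+1]×[−1,1]×[e⁻¹,e]`. -/
def RLset (L : ℝ) : Set G :=
  Set.Icc (L - 1) (L + 1) ×ˢ (Set.Icc (-1 : ℝ) 1 ×ˢ Set.Icc (Real.exp (-1)) (Real.exp 1))

/-- `f_L = χ_{R_L} − χ_{R₀}`. -/
def fL (L : ℝ) : G → ℝ := fun x =>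
  (RLset L).indicator (fun _ => (1 : ℝ)) x - R0set.indicator (fun _ => (1 : ℝ)) x

/-- The mean of `g` over `R` with respect to `ρ`. -/
def czMean (g : G → ℝ) (R : Set G) : ℝ := (∫ x in R, g x ∂ρG) / (ρG R).toReal

/-- `‖g‖_{BMO} = sup_R ρ(R)⁻¹ ∫_R |g − g_R| dρ` over Calderón–Zygmund sets `R`. -/
def czBMO (g : G → ℝ) : ℝ≥0∞ :=
  ⨆ (R : Set G) (_ : IsCZ R),
    (ρG R)⁻¹ * ∫⁻ x in R, ENNReal.ofReal |g x - czMean g R| ∂ρG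

/-- `‖h‖_{BMO(ℝ)} = sup_Q |Q|⁻¹ ∫_Q |h − h_Q|` over bounded intervals `Q ⊂ ℝ`. -/
def lineBMO (h : ℝ → ℝ) : ℝ≥0∞ :=
  ⨆ (a : ℝ) (b : ℝ) (_ : a < b),
    (ENNReal.ofReal (b - a))⁻¹ *
      ∫⁻ s in Set.Icc a b, ENNReal.ofReal |h s - (∫ u in Set.Icc a b, h u) / (b - a)|

/-- `2R₀ = [−2,2]×[−2,2]×[e⁻²,e²]`. -/
def twoR0set : Set G :=
  Set.Icc (-2 : ℝ) 2 ×ˢ (Set.Icc (-2 : ℝ) 2 ×ˢ Set.Icc (Real.exp (-2)) (Real.exp 2))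

/-- The set `{x₁ > 3, |x₂| < 1, e⁻¹ < a < e}`. -/
def domSpecial : Set G :=
  {x : G | 3 < x.1 ∧ |x.2.1| < 1 ∧ Real.exp (-1) < x.2.2 ∧ x.2.2 < Real.exp 1}

/-- The function equal to `1/(x₁ (log x₁)^{3/2})` on `{x₁ > 3, |x₂| < 1, e⁻¹ < a < e}`,
to `c₀` on `R₀`, and `0` elsewhere. -/
def fSpecial (c0 : ℝ) : G → ℝ := fun x =>
  domSpecial.indicator (fun y => (y.1 * Real.log y.1 ^ ((3 : ℝ)/2))⁻¹) x
    + R0set.indicator (fun _ => c0) x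


lemma lintegral_exp_sub (F : ℝ → ℝ≥0∞) :
    ∫⁻ a in Ioi (0:ℝ), ENNReal.ofReal a⁻¹ * F a = ∫⁻ s : ℝ, F (Real.exp s) := by
  have h := lintegral_image_eq_lintegral_abs_deriv_mul (s := univ) MeasurableSet.univ
    (f := Real.exp) (f' := Real.exp) (fun x _ => (Real.hasDerivAt_exp x).hasDerivWithinAt)
    (Real.exp_injective.injOn) (fun a => ENNReal.ofReal a⁻¹ * F a)
  rw [image_univ, Real.range_exp] at h
  rw [h, Measure.restrict_univ]
  refine lintegral_congr fun s => ?_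
  rw [abs_of_pos (Real.exp_pos s), ← mul_assoc, ← ENNReal.ofReal_mul (Real.exp_pos s).le,
    mul_inv_cancel₀ (Real.exp_pos s).ne']
  simp

lemma lintegral_rho (F : G → ℝ≥0∞) (hF : Measurable F) :
    ∫⁻ x, F x ∂ρG = ∫⁻ s : ℝ, ∫⁻ p : ℝ × ℝ, F (p.1, p.2, Real.exp s) := by
  have hd : Measurable (fun x : G => ENNReal.ofReal (if 0 < x.2.2 then x.2.2⁻¹ else 0)) := by
    refine Measurable.ennreal_ofReal (Measurable.ite ?_ (by fun_prop) (by fun_prop))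
    exact measurableSet_lt (by fun_prop) (by fun_prop)
  rw [ρG, lintegral_withDensity_eq_lintegral_mul _ hd hF]
  have e := (volume_preserving_prodAssoc (α₁ := ℝ) (β₁ := ℝ) (γ₁ := ℝ))
  have h1 : ∀ g : G → ℝ≥0∞, Measurable g → ∫⁻ x, g x = ∫⁻ a : ℝ, ∫⁻ p : ℝ × ℝ, g (p.1, p.2, a) := by
    intro g hg
    rw [← e.lintegral_comp hg]
    rw [Measure.volume_eq_prod, lintegral_prod_symm _ (by fun_prop)]
    rfl
  rw [h1 _ (hd.mul hF), ← lintegral_exp_sub (fun a => ∫⁻ p : ℝ × ℝ, F (p.1, p.2, a)),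
    ← lintegral_indicator measurableSet_Ioi]
  refine lintegral_congr fun a => ?_
  by_cases ha : 0 < a
  · simp only [Pi.mul_apply, ha, if_true, indicator, mem_Ioi]
    rw [lintegral_const_mul _ (by fun_prop)]
  · simp [ha, indicator]

lemma lintegral_affine1 (F : ℝ → ℝ≥0∞) (hF : Measurable F) (c k : ℝ) (hk : 0 < k) :
    ∫⁻ p, F (c + k * p) = ENNReal.ofReal k⁻¹ * ∫⁻ p, F p := by
  have h := lintegral_map (μ := volume) (f := fun p => F (c + p)) (g := fun p : ℝ => k * p)
    (by fun_prop) (by fun_prop)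
  rw [Real.map_volume_mul_left hk.ne', lintegral_smul_measure] at h
  rw [← h, lintegral_add_left_eq_self F c, abs_of_pos (inv_pos.2 hk)]
  simp

lemma lintegral_affine2 (F : ℝ × ℝ → ℝ≥0∞) (hF : Measurable F) (c d k : ℝ) (hk : 0 < k) :
    ∫⁻ p : ℝ × ℝ, F (c + k * p.1, d + k * p.2) = ENNReal.ofReal (k ^ 2)⁻¹ * ∫⁻ p, F p := by
  rw [Measure.volume_eq_prod, lintegral_prod _ (by fun_prop), lintegral_prod _ (by fun_prop)]
  have : ∀ x : ℝ, ∫⁻ y : ℝ, F (c + k * x, d + k * y)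
      = ENNReal.ofReal k⁻¹ * ∫⁻ y, F (c + k * x, y) := fun x =>
    lintegral_affine1 (fun y => F (c + k * x, y)) (by fun_prop) d k hk
  simp only [this]
  rw [lintegral_const_mul _ (Measurable.lintegral_prod_right' (f := fun z : ℝ × ℝ => F (c + k * z.1, z.2)) (by fun_prop))]
  rw [lintegral_affine1 (fun x => ∫⁻ y, F (x, y)) hF.lintegral_prod_right' c k hk, ← mul_assoc,
    ← ENNReal.ofReal_mul (by positivity)]
  congr 2
  field_simp

lemma lintegral_radial (F : ℝ → ℝ≥0∞) (hF : Measurable F) :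
    ∫⁻ p : ℝ × ℝ, F (p.1 ^ 2 + p.2 ^ 2) = ENNReal.ofReal π * ∫⁻ q in Ioi (0:ℝ), F q := by
  rw [← lintegral_comp_polarCoord_symm]
  have h0 : ∀ p : ℝ × ℝ, (polarCoord.symm p).1 ^ 2 + (polarCoord.symm p).2 ^ 2 = p.1 ^ 2 := by
    intro p
    simp only [polarCoord_symm_apply]
    nlinarith [Real.sin_sq_add_cos_sq p.2]
  simp only [h0]
  have h := lintegral_image_eq_lintegral_abs_deriv_mul (s := Ioi (0:ℝ)) measurableSet_Ioi
    (f := fun x => x ^ 2) (f' := fun x => 2 * x)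
    (fun x _ => by simpa using (hasDerivAt_pow 2 x).hasDerivWithinAt)
    (fun x hx y hy hxy => by
      exact (pow_left_inj₀ (le_of_lt hx) (le_of_lt hy) two_ne_zero).1 hxy) F
  have hi : Set.image (fun x : ℝ => x ^ 2) (Ioi 0) = Ioi 0 := by
    ext y
    constructor
    · rintro ⟨x, hx, rfl⟩
      exact pow_pos (mem_Ioi.1 hx) 2
    · intro hy
      exact ⟨Real.sqrt y, Real.sqrt_pos.2 hy, Real.sq_sqrt (le_of_lt hy)⟩
  rw [hi] at h
  rw [h, polarCoord_target]
  rw [Measure.volume_eq_prod, ← Measure.prod_restrict]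
  rw [lintegral_prod _ (by fun_prop), ← lintegral_const_mul _ (by fun_prop)]
  refine setLIntegral_congr_fun measurableSet_Ioi fun x hx => ?_
  have hx0 : 0 < x := hx
  simp only [lintegral_const, Measure.restrict_apply_univ, Real.volume_Ioo, smul_eq_mul]
  rw [abs_of_pos (by positivity), mul_right_comm, ← ENNReal.ofReal_mul hx0.le, ← mul_assoc,
    ← ENNReal.ofReal_mul pi_pos.le]
  congr 2
  ring

/-- The integral of a function of `|x|²` and `log a`. -/
lemma lintegral_rho_radial (F : ℝ → ℝ → ℝ≥0∞) (hF : Measurable (Function.uncurry F)) :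
    ∫⁻ x : G, F (x.1 ^ 2 + x.2.1 ^ 2) (Real.log x.2.2) ∂ρG
      = ENNReal.ofReal π * ∫⁻ v : ℝ, ∫⁻ q in Ioi (0:ℝ), F q v := by
  have hm : Measurable (fun x : G => F (x.1 ^ 2 + x.2.1 ^ 2) (Real.log x.2.2)) :=
    hF.comp (f := fun x : G => (x.1 ^ 2 + x.2.1 ^ 2, Real.log x.2.2)) (by fun_prop)
  rw [lintegral_rho _ hm]
  simp only [Real.log_exp]
  have : ∀ s : ℝ, ∫⁻ p : ℝ × ℝ, F (p.1 ^ 2 + p.2 ^ 2) s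
      = ENNReal.ofReal π * ∫⁻ q in Ioi (0:ℝ), F q s := fun s =>
    lintegral_radial (fun q => F q s) (hF.comp (f := fun q : ℝ => (q, s)) (by fun_prop))
  simp only [this]
  rw [lintegral_const_mul]
  exact Measurable.lintegral_prod_right' (f := fun z : ℝ × ℝ => F z.2 z.1)
    (hF.comp (f := fun z : ℝ × ℝ => (z.2, z.1)) (by fun_prop))

@[fun_prop] lemma measurable_gMul (c : G) : Measurable (gMul c) := by
  unfold gMul; fun_prop

@[fun_prop] lemma measurable_gMulInv (x : G) : Measurable (fun y => gMul x (gInv y)) := by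
  unfold gMul gInv; fun_prop

lemma lintegral_gMul (F : G → ℝ≥0∞) (hF : Measurable F) (c : G) (hc : 0 < c.2.2) :
    ∫⁻ x, F (gMul c x) ∂ρG = ENNReal.ofReal (c.2.2 ^ 2)⁻¹ * ∫⁻ x, F x ∂ρG := by
  rw [lintegral_rho _ (by fun_prop), lintegral_rho _ hF]
  have : ∀ s : ℝ, ∫⁻ p : ℝ × ℝ, F (gMul c (p.1, p.2, Real.exp s))
      = ENNReal.ofReal (c.2.2 ^ 2)⁻¹ * ∫⁻ p : ℝ × ℝ, F (p.1, p.2, Real.exp (Real.log c.2.2 + s)) := by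
    intro s
    rw [Real.exp_add, Real.exp_log hc]
    exact lintegral_affine2 (fun p => F (p.1, p.2, c.2.2 * Real.exp s)) (by fun_prop) _ _ _ hc
  simp only [this]
  have hm : Measurable (fun s : ℝ => ∫⁻ p : ℝ × ℝ, F (p.1, p.2, Real.exp s)) :=
    Measurable.lintegral_prod_right' (f := fun z : ℝ × (ℝ × ℝ) => F (z.2.1, z.2.2, Real.exp z.1))
      (by fun_prop)
  rw [lintegral_const_mul _ (by fun_prop), lintegral_add_left_eq_self
    (fun s : ℝ => ∫⁻ p : ℝ × ℝ, F (p.1, p.2, Real.exp s))]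

lemma lintegral_gMulInv (F : G → ℝ≥0∞) (hF : Measurable F) (x : G) (hx : 0 < x.2.2) :
    ∫⁻ y, F (gMul x (gInv y)) ∂ρG = ∫⁻ z, ENNReal.ofReal (z.2.2 ^ 2)⁻¹ * F z ∂ρG := by
  rw [lintegral_rho _ (by fun_prop), lintegral_rho _ (by fun_prop)]
  have : ∀ s : ℝ, ∫⁻ p : ℝ × ℝ, F (gMul x (gInv (p.1, p.2, Real.exp s)))
      = ∫⁻ p : ℝ × ℝ, ENNReal.ofReal (Real.exp (Real.log x.2.2 - s) ^ 2)⁻¹ *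
          F (p.1, p.2, Real.exp (Real.log x.2.2 - s)) := by
    intro s
    rw [lintegral_const_mul _ (by fun_prop)]
    have h := lintegral_affine2 (fun p => F (-p.1, -p.2, Real.exp (Real.log x.2.2 - s)))
      (by fun_prop) (-x.1) (-x.2.1) _ (Real.exp_pos (Real.log x.2.2 - s))
    have h3 : ∫⁻ p : ℝ × ℝ, F (-p.1, -p.2, Real.exp (Real.log x.2.2 - s))
      = ∫⁻ p : ℝ × ℝ, F (p.1, p.2, Real.exp (Real.log x.2.2 - s)) :=
      lintegral_neg_eq_self (μ := (volume : Measure (ℝ × ℝ)))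
       (fun p : ℝ × ℝ => F (p.1, p.2, Real.exp (Real.log x.2.2 - s)))
    rw [h3] at h
    rw [← h]
    refine lintegral_congr fun p => ?_
    congr 1
    have := Real.exp_pos s
    rw [Real.exp_sub, Real.exp_log hx]
    simp only [gMul, gInv, Prod.mk.injEq]
    refine ⟨?_, ?_, ?_⟩ <;> field_simp <;> ring
  simp only [this]
  exact lintegral_sub_left_eq_self (fun s : ℝ => ∫⁻ p : ℝ × ℝ,
    ENNReal.ofReal (Real.exp s ^ 2)⁻¹ * F (p.1, p.2, Real.exp s)) (Real.log x.2.2)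

lemma rho_ae_pos : ∀ᵐ x ∂ρG, 0 < x.2.2 := by
  have hs : MeasurableSet {x : G | 0 < x.2.2} := measurableSet_lt (by fun_prop) (by fun_prop)
  rw [ae_iff]
  have h : MeasurableSet {x : G | ¬ 0 < x.2.2} := hs.compl
  rw [← lintegral_indicator_one h, lintegral_rho _ (by
    exact (measurable_one.indicator h))]
  simp [indicator, not_le.2 (Real.exp_pos _)]

lemma map_gMul (c : G) (hc : 0 < c.2.2) :
    Measure.map (gMul c) ρG = ENNReal.ofReal (c.2.2 ^ 2)⁻¹ • ρG := by
  refine Measure.ext_of_lintegral _ fun F hF => ?_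
  rw [lintegral_map hF (by fun_prop), lintegral_gMul F hF c hc, lintegral_smul_measure, smul_eq_mul]

lemma map_gMulInv (x : G) (hx : 0 < x.2.2) :
    Measure.map (fun y => gMul x (gInv y)) ρG
      = ρG.withDensity (fun z => ENNReal.ofReal (z.2.2 ^ 2)⁻¹) := by
  refine Measure.ext_of_lintegral _ fun F hF => ?_
  rw [lintegral_map hF (by fun_prop), lintegral_gMulInv F hF x hx,
    lintegral_withDensity_eq_lintegral_mul _ (by fun_prop) hF]
  rfl


/-- The normalizing constant of the heat kernel. -/
def cH : ℝ := (8 * Real.pi ^ ((3 : ℝ)/2))⁻¹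

lemma cH_pos : 0 < cH := by unfold cH; positivity

/-- The radial profile of the heat kernel. -/
def phiT (t s : ℝ) : ℝ :=
  (if s = 0 then 1 else s / Real.sinh s) * t ^ (-(3 : ℝ)/2) * Real.exp (-(s ^ 2) / (4 * t))

/-- Euclidean squared distance of the horizontal components. -/
def hq (x y : G) : ℝ := (x.1 - y.1) ^ 2 + (x.2.1 - y.2.1) ^ 2

/-- The argument of `arcosh` giving the distance. -/
def cArg (a b q : ℝ) : ℝ := (a ^ 2 + b ^ 2 + q) / (2 * a * b)

/-- The heat kernel as an integral kernel with respect to `ρ`. -/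
def kerH (t a b q : ℝ) : ℝ := cH * (a * b)⁻¹ * phiT t (Real.arcosh (cArg a b q))

lemma measurable_arcosh : Measurable Real.arcosh := by
  unfold Real.arcosh; fun_prop

lemma measurable_phiT (t : ℝ) : Measurable (phiT t) := by
  unfold phiT
  refine (Measurable.mul (Measurable.mul ?_ (by fun_prop)) (by fun_prop))
  refine Measurable.ite (measurableSet_singleton 0) (by fun_prop) ?_
  exact measurable_id.div Real.continuous_sinh.measurable

lemma measurable_kerH (t : ℝ) : Measurable (fun p : ℝ × ℝ × ℝ => kerH t p.1 p.2.1 p.2.2) := by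
  unfold kerH
  refine Measurable.mul (by fun_prop) ((measurable_phiT t).comp (measurable_arcosh.comp ?_))
  unfold cArg; fun_prop

lemma measurable_kerH' (t : ℝ) (x : G) : Measurable (fun y : G => kerH t x.2.2 y.2.2 (hq x y)) := by
  refine (measurable_kerH t).comp (f := fun y : G => (x.2.2, y.2.2, hq x y)) ?_
  unfold hq; fun_prop

lemma heatK_eq (t : ℝ) (x : G) :
    heatK t x = cH * Real.sqrt (deltaG x) * phiT t (rG x) := by
  unfold heatK cH phiT; ring

lemma measurable_heatK (t : ℝ) : Measurable (heatK t) := by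
  have : heatK t = fun x => cH * Real.sqrt (deltaG x) * phiT t (rG x) := funext (heatK_eq t)
  rw [this]
  refine Measurable.mul ?_ ((measurable_phiT t).comp ?_)
  · unfold deltaG; fun_prop
  · unfold rG coshArg; fun_prop

lemma heatK_gMul (t : ℝ) (x z : G) (hx : 0 < x.2.2) (hz : 0 < z.2.2) :
    (z.2.2 ^ 2)⁻¹ * heatK t (gMul (gInv z) x) = kerH t x.2.2 z.2.2 (hq x z) := by
  have h1 : coshArg (gMul (gInv z) x) = cArg x.2.2 z.2.2 (hq x z) := by
    simp only [coshArg, gMul, gInv, cArg, hq]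
    field_simp
    ring
  have h2 : Real.sqrt (deltaG (gMul (gInv z) x)) = z.2.2 / x.2.2 := by
    have : deltaG (gMul (gInv z) x) = (z.2.2 / x.2.2) ^ 2 := by
      simp only [deltaG, gMul, gInv]; field_simp
    rw [this, Real.sqrt_sq (by positivity)]
  have h3 : rG (gMul (gInv z) x) = Real.arcosh (cArg x.2.2 z.2.2 (hq x z)) := by
    unfold rG Real.arcosh; rw [h1]
  rw [heatK_eq, h2, h3, kerH]
  field_simp

lemma convHeat_eq (f : G → ℝ) (hf : AEStronglyMeasurable f ρG) (t : ℝ) (x : G) (hx : 0 < x.2.2) :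
    convHeat f t x = ∫ y, f y * kerH t x.2.2 y.2.2 (hq x y) ∂ρG := by
  set g : G → ℝ := fun z => f z * heatK t (gMul (gInv z) x) with hg
  have hmk : Measurable (fun z : G => heatK t (gMul (gInv z) x)) := by
    refine (measurable_heatK t).comp ?_
    unfold gMul gInv; fun_prop
  have h1 : convHeat f t x = ∫ y, g (gMul x (gInv y)) ∂ρG := by
    unfold convHeat
    refine integral_congr_ae ?_
    filter_upwards [rho_ae_pos] with y hy
    simp only [hg]
    congr 2
    simp only [gMul, gInv]
    refine Prod.ext ?_ (Prod.ext ?_ ?_) <;> simp <;> field_simp <;> ring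
  have hac : ρG.withDensity (fun z => ENNReal.ofReal (z.2.2 ^ 2)⁻¹) ≪ ρG :=
    withDensity_absolutelyContinuous _ _
  have hgm : AEStronglyMeasurable g (Measure.map (fun y => gMul x (gInv y)) ρG) := by
    rw [map_gMulInv x hx]
    exact (hf.mono_ac hac).mul hmk.aestronglyMeasurable
  rw [h1, ← integral_map (φ := fun y => gMul x (gInv y)) (measurable_gMulInv x).aemeasurable hgm, map_gMulInv x hx,
    integral_withDensity_eq_integral_toReal_smul (by fun_prop) (by simp)]
  refine integral_congr_ae ?_
  filter_upwards [rho_ae_pos] with z hz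
  rw [ENNReal.toReal_ofReal (by positivity), ← heatK_gMul t x z hx hz, smul_eq_mul]
  simp only [hg]; ring

lemma one_le_cArg {a b q : ℝ} (ha : 0 < a) (hb : 0 < b) (hq : 0 ≤ q) : 1 ≤ cArg a b q := by
  unfold cArg
  rw [le_div_iff₀ (by positivity)]
  nlinarith [sq_nonneg (a - b)]

lemma hq_nonneg (x y : G) : 0 ≤ hq x y := by unfold hq; positivity

lemma phiT_nonneg {t s : ℝ} (ht : 0 < t) (hs : 0 ≤ s) : 0 ≤ phiT t s := by
  unfold phiT
  have : 0 ≤ (if s = 0 then 1 else s / Real.sinh s) := by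
    split_ifs
    · norm_num
    · exact div_nonneg hs (Real.sinh_nonneg_iff.2 hs)
  positivity

lemma kerH_nonneg {t a b q : ℝ} (ht : 0 < t) (ha : 0 < a) (hb : 0 < b) (hq : 0 ≤ q) :
    0 ≤ kerH t a b q := by
  unfold kerH
  have := cH_pos
  have := phiT_nonneg ht (Real.arcosh_nonneg (one_le_cArg ha hb hq))
  positivity

lemma phiT_le {t s : ℝ} (ht : 0 < t) (hs : 0 ≤ s) :
    phiT t s ≤ t ^ (-(3 : ℝ)/2) * Real.exp (-(s ^ 2) / (4 * t)) := by
  unfold phiT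
  have : (if s = 0 then 1 else s / Real.sinh s) ≤ 1 := by
    split_ifs with h
    · exact le_rfl
    · exact div_le_one_of_le₀ (Real.self_le_sinh_iff.2 hs) (Real.sinh_nonneg_iff.2 hs)
  rw [mul_assoc]
  exact mul_le_of_le_one_left (by positivity) this

/-- For fixed `t`, `x`, the kernel is bounded in `y`. -/
lemma kerH_bdd {t a b q : ℝ} (ht : 0 < t) (ha : 0 < a) (hb : 0 < b) (hq : 0 ≤ q) :
    kerH t a b q ≤ cH * (a ^ 2)⁻¹ * 2 * t ^ (-(3 : ℝ)/2) * Real.exp t := by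
  have h1 := one_le_cArg ha hb hq
  set s := Real.arcosh (cArg a b q) with hs
  have hs0 : 0 ≤ s := Real.arcosh_nonneg h1
  have hc : Real.cosh s = cArg a b q := Real.cosh_arcosh h1
  have h2 : a / b ≤ 2 * Real.exp s := by
    have : a / (2 * b) ≤ cArg a b q := by
      unfold cArg
      rw [div_le_div_iff₀ (by positivity) (by positivity)]
      nlinarith [mul_pos ha hb, mul_nonneg hb.le hq, mul_pos hb (pow_pos hb 2)]
    have h3 : Real.cosh s ≤ Real.exp s := by
      rw [Real.cosh_eq]; have := Real.exp_le_exp.2 (show -s ≤ s by linarith); linarith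
    rw [← hc] at this
    have : a / b = 2 * (a / (2 * b)) := by field_simp
    linarith
  have h3 : b⁻¹ ≤ a⁻¹ * (2 * Real.exp s) := by
    rw [← div_eq_inv_mul, le_div_iff₀ ha, ← div_eq_inv_mul]; exact h2
  have h4 : Real.exp s * Real.exp (-(s ^ 2) / (4 * t)) ≤ Real.exp t := by
    rw [← Real.exp_add, Real.exp_le_exp]
    have : s + -(s ^ 2) / (4 * t) - t = -((s - 2 * t) ^ 2 / (4 * t)) := by field_simp; ring
    have h5 : 0 ≤ (s - 2 * t) ^ 2 / (4 * t) := by positivity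
    linarith
  have hcp := cH_pos
  unfold kerH
  rw [← hs]
  calc cH * (a * b)⁻¹ * phiT t s
      ≤ cH * (a⁻¹ * (a⁻¹ * (2 * Real.exp s))) * (t ^ (-(3 : ℝ)/2) * Real.exp (-(s ^ 2) / (4 * t))) := by
        rw [mul_inv]
        gcongr
        · exact phiT_nonneg ht hs0
        · exact phiT_le ht hs0
    _ = cH * (a ^ 2)⁻¹ * 2 * t ^ (-(3 : ℝ)/2) * (Real.exp s * Real.exp (-(s ^ 2) / (4 * t))) := by
        field_simp
    _ ≤ _ := by gcongr


lemma kerH_ae_bdd (t : ℝ) (ht : 0 < t) (x : G) (hx : 0 < x.2.2) :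
    ∀ᵐ y ∂ρG, ‖kerH t x.2.2 y.2.2 (hq x y)‖
      ≤ cH * (x.2.2 ^ 2)⁻¹ * 2 * t ^ (-(3 : ℝ)/2) * Real.exp t := by
  filter_upwards [rho_ae_pos] with y hy
  rw [Real.norm_of_nonneg (kerH_nonneg ht hx hy (hq_nonneg x y))]
  exact kerH_bdd ht hx hy (hq_nonneg x y)

lemma integrable_mul_kerH (f : G → ℝ) (hf : Integrable f ρG) (t : ℝ) (ht : 0 < t) (x : G)
    (hx : 0 < x.2.2) : Integrable (fun y => f y * kerH t x.2.2 y.2.2 (hq x y)) ρG :=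
  hf.mul_bdd (measurable_kerH' t x).aestronglyMeasurable (kerH_ae_bdd t ht x hx)

lemma convHeat_le_L1 (f : G → ℝ) (hf : Integrable f ρG) (t : ℝ) (ht : 0 < t) (x : G)
    (hx : 0 < x.2.2) : ENNReal.ofReal |convHeat f t x|
      ≤ ENNReal.ofReal (cH * (x.2.2 ^ 2)⁻¹ * 2 * t ^ (-(3 : ℝ)/2) * Real.exp t) * eLpNorm f 1 ρG := by
  rw [convHeat_eq f hf.1 t x hx, ← Real.norm_eq_abs, ofReal_norm,
    eLpNorm_one_eq_lintegral_enorm, ← lintegral_const_mul' _ _ ENNReal.ofReal_ne_top]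
  refine (enorm_integral_le_lintegral_enorm _).trans (lintegral_mono_ae ?_)
  filter_upwards [kerH_ae_bdd t ht x hx] with y hy
  rw [enorm_mul, mul_comm]
  gcongr
  rw [← ofReal_norm]
  exact ENNReal.ofReal_le_ofReal hy

lemma maxHeat_le_tsum (f : G → ℝ) (hf : Integrable f ρG) (lam : ℕ → ℝ) (A : ℕ → G → ℝ)
    (h : IsH1Decomp f lam A) (x : G) (hx : 0 < x.2.2) :
    maxHeat f x ≤ ∑' j, ENNReal.ofReal |lam j| * maxHeat (A j) x := by
  obtain ⟨hA, -, hlim⟩ := h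
  refine iSup₂_le fun t ht => ?_
  set M := ENNReal.ofReal (cH * (x.2.2 ^ 2)⁻¹ * 2 * t ^ (-(3 : ℝ)/2) * Real.exp t)
  have hl := (ENNReal.Tendsto.const_mul (a := M) hlim (Or.inr ENNReal.ofReal_ne_top)).const_add
    (∑' j, ENNReal.ofReal |lam j| * maxHeat (A j) x)
  rw [mul_zero, add_zero] at hl
  refine ge_of_tendsto' hl fun N => ?_
  have hAi : ∀ j, Integrable (A j) ρG := fun j => (hA j).1
  have hgi : Integrable (fun y => ∑ j ∈ Finset.range N, lam j * A j y) ρG :=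
    integrable_finsetSum _ fun j _ => (hAi j).const_mul _
  have hsub : Integrable (fun y => f y - ∑ j ∈ Finset.range N, lam j * A j y) ρG := hf.sub hgi
  have hconv : convHeat f t x = ∑ j ∈ Finset.range N, lam j * convHeat (A j) t x
      + convHeat (fun y => f y - ∑ j ∈ Finset.range N, lam j * A j y) t x := by
    rw [convHeat_eq _ hf.1 t x hx, convHeat_eq _ hsub.1 t x hx]
    have : ∀ j, lam j * convHeat (A j) t x
        = ∫ y, lam j * (A j y * kerH t x.2.2 y.2.2 (hq x y)) ∂ρG := fun j => by
      rw [convHeat_eq _ (hAi j).1 t x hx, integral_const_mul]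
    simp only [this]
    rw [← integral_finsetSum _ fun j _ => (integrable_mul_kerH _ (hAi j) t ht x hx).const_mul _,
      ← integral_add]
    · refine integral_congr_ae (Eventually.of_forall fun y => ?_)
      simp only [sub_mul, Finset.sum_mul]
      simp only [mul_assoc]
      ring
    · exact integrable_finsetSum _ fun j _ => (integrable_mul_kerH _ (hAi j) t ht x hx).const_mul _
    · exact integrable_mul_kerH _ hsub t ht x hx
  calc ENNReal.ofReal |convHeat f t x|
      ≤ ENNReal.ofReal (∑ j ∈ Finset.range N, |lam j| * |convHeat (A j) t x|
        + |convHeat (fun y => f y - ∑ j ∈ Finset.range N, lam j * A j y) t x|) := by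
        refine ENNReal.ofReal_le_ofReal ?_
        rw [hconv]
        refine (abs_add_le _ _).trans (add_le_add ?_ le_rfl)
        refine (Finset.abs_sum_le_sum_abs _ _).trans (le_of_eq ?_)
        simp only [abs_mul]
    _ = ∑ j ∈ Finset.range N, ENNReal.ofReal |lam j| * ENNReal.ofReal |convHeat (A j) t x|
        + ENNReal.ofReal |convHeat (fun y => f y - ∑ j ∈ Finset.range N, lam j * A j y) t x| := by
        rw [ENNReal.ofReal_add (Finset.sum_nonneg fun _ _ => by positivity) (abs_nonneg _),
          ENNReal.ofReal_sum_of_nonneg fun _ _ => by positivity]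
        simp only [ENNReal.ofReal_mul (abs_nonneg _)]
    _ ≤ _ := by
        refine add_le_add ?_ (convHeat_le_L1 _ hsub t ht x hx)
        refine le_trans (Finset.sum_le_sum fun j _ => ?_) (ENNReal.sum_le_tsum (Finset.range N))
        gcongr
        exact le_iSup₂_of_le t ht le_rfl

lemma main_of_atoms (C : ℝ) (hC : 0 < C)
    (H : ∀ A, IsAtomG A → ∃ B : G → ℝ≥0∞, Measurable B ∧ (∀ x : G, 0 < x.2.2 → maxHeat A x ≤ B x) ∧
      ∫⁻ x, B x ∂ρG ≤ ENNReal.ofReal C) (f : G → ℝ) (hf : MemH1 f) :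
    ∫⁻ x, maxHeat f x ∂ρG ≤ ENNReal.ofReal (C * H1norm f) := by
  obtain ⟨hfi, lam0, A0, h0⟩ := hf
  have key : ∀ lam A, IsH1Decomp f lam A →
      ∫⁻ x, maxHeat f x ∂ρG ≤ ENNReal.ofReal (C * ∑' j, |lam j|) := by
    intro lam A h
    choose B hBm hB hBi using fun j => H (A j) (h.1 j)
    calc ∫⁻ x, maxHeat f x ∂ρG ≤ ∫⁻ x, ∑' j, ENNReal.ofReal |lam j| * B j x ∂ρG := by
          refine lintegral_mono_ae ?_
          filter_upwards [rho_ae_pos] with x hx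
          refine (maxHeat_le_tsum f hfi lam A h x hx).trans (ENNReal.tsum_le_tsum fun j => ?_)
          gcongr
          exact hB j x hx
      _ = ∑' j, ENNReal.ofReal |lam j| * ∫⁻ x, B j x ∂ρG := by
          rw [lintegral_tsum fun j => ((hBm j).const_mul _).aemeasurable]
          simp only [lintegral_const_mul _ (hBm _)]
      _ ≤ ∑' j, ENNReal.ofReal |lam j| * ENNReal.ofReal C := by
          refine ENNReal.tsum_le_tsum fun j => ?_
          gcongr
          exact hBi j
      _ = ENNReal.ofReal (C * ∑' j, |lam j|) := by
          rw [ENNReal.tsum_mul_right, mul_comm C, ENNReal.ofReal_mul (tsum_nonneg fun _ => abs_nonneg _),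
            ENNReal.ofReal_tsum_of_nonneg (fun _ => abs_nonneg _) h.2.1]
  have hfin : ∫⁻ x, maxHeat f x ∂ρG ≠ ∞ := ne_top_of_le_ne_top ENNReal.ofReal_ne_top (key _ _ h0)
  set I := (∫⁻ x, maxHeat f x ∂ρG).toReal with hI
  rw [← ENNReal.ofReal_toReal hfin]
  refine ENNReal.ofReal_le_ofReal ?_
  have : I / C ≤ H1norm f := by
    refine le_csInf ⟨_, lam0, A0, h0, rfl⟩ ?_
    rintro s ⟨lam, A, h, rfl⟩
    rw [div_le_iff₀' hC]
    have h1 := key lam A h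
    exact ENNReal.toReal_le_of_le_ofReal (mul_nonneg hC.le (tsum_nonneg fun _ => abs_nonneg _)) h1
  rwa [div_le_iff₀' hC] at this


/-- Membership in the box centred at the identity. -/
def InBox (L r : ℝ) (y : G) : Prop :=
  |y.1| ≤ L / 2 ∧ |y.2.1| ≤ L / 2 ∧ Real.exp (-r) ≤ y.2.2 ∧ y.2.2 ≤ Real.exp r

/-- Atoms centred at the identity. -/
structure CAtom (A : G → ℝ) (L r : ℝ) : Prop where
  integrable : Integrable A ρG
  supp : ∀ y, ¬ InBox L r y → A y = 0
  bdd : ∀ᵐ y ∂ρG, |A y| ≤ (2 * r * L ^ 2)⁻¹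
  mean : ∫ y, A y ∂ρG = 0

lemma rho_box (c : G) (L r : ℝ) (hc : 0 < c.2.2) (hL : 0 < L) (hr : 0 < r) :
    ρG (Set.Icc (c.1 - L/2) (c.1 + L/2) ×ˢ
        (Set.Icc (c.2.1 - L/2) (c.2.1 + L/2) ×ˢ
         Set.Icc (c.2.2 * Real.exp (-r)) (c.2.2 * Real.exp r))) = ENNReal.ofReal (2 * r * L ^ 2) := by
  set R := (Set.Icc (c.1 - L/2) (c.1 + L/2) ×ˢ
        (Set.Icc (c.2.1 - L/2) (c.2.1 + L/2) ×ˢ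
         Set.Icc (c.2.2 * Real.exp (-r)) (c.2.2 * Real.exp r))) with hR
  have hRm : MeasurableSet R := measurableSet_Icc.prod (measurableSet_Icc.prod measurableSet_Icc)
  rw [← lintegral_indicator_one hRm, lintegral_rho _ (measurable_one.indicator hRm)]
  have h1 : ∀ s : ℝ, ∫⁻ p : ℝ × ℝ, R.indicator (1 : G → ℝ≥0∞) (p.1, p.2, Real.exp s)
      = (Icc (Real.log c.2.2 - r) (Real.log c.2.2 + r)).indicator
        (fun _ => ENNReal.ofReal (L ^ 2)) s := by
    intro s
    have hs : Real.exp s ∈ Set.Icc (c.2.2 * Real.exp (-r)) (c.2.2 * Real.exp r) ↔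
        s ∈ Icc (Real.log c.2.2 - r) (Real.log c.2.2 + r) := by
      have e1 : c.2.2 * Real.exp (-r) = Real.exp (Real.log c.2.2 - r) := by
        rw [sub_eq_add_neg, Real.exp_add, Real.exp_log hc]
      have e2 : c.2.2 * Real.exp r = Real.exp (Real.log c.2.2 + r) := by
        rw [Real.exp_add, Real.exp_log hc]
      rw [e1, e2, mem_Icc, mem_Icc, Real.exp_le_exp, Real.exp_le_exp]
    by_cases h : s ∈ Icc (Real.log c.2.2 - r) (Real.log c.2.2 + r)
    · rw [indicator_of_mem h]
      have : ∀ p : ℝ × ℝ, R.indicator (1 : G → ℝ≥0∞) (p.1, p.2, Real.exp s)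
        = ((Set.Icc (c.1 - L/2) (c.1 + L/2)) ×ˢ (Set.Icc (c.2.1 - L/2) (c.2.1 + L/2))).indicator
          (1 : ℝ × ℝ → ℝ≥0∞) p := by
        intro p
        have h2 := hs.2 h
        by_cases h3 : p ∈ ((Set.Icc (c.1 - L/2) (c.1 + L/2)) ×ˢ (Set.Icc (c.2.1 - L/2) (c.2.1 + L/2)))
        · have h4 : ((p.1, p.2, Real.exp s) : G) ∈ R := ⟨h3.1, h3.2, h2⟩
          rw [indicator_of_mem h3, indicator_of_mem h4]; rfl
        · rw [indicator_of_notMem h3, indicator_of_notMem fun h4 => h3 ⟨h4.1, h4.2.1⟩]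
      simp only [this]
      rw [lintegral_indicator_one (measurableSet_Icc.prod measurableSet_Icc), Measure.volume_eq_prod,
        Measure.prod_prod, Real.volume_Icc, Real.volume_Icc, ← ENNReal.ofReal_mul (by linarith)]
      congr 1; ring
    · rw [indicator_of_notMem h]
      have : ∀ p : ℝ × ℝ, R.indicator (1 : G → ℝ≥0∞) (p.1, p.2, Real.exp s) = 0 := fun p =>
        indicator_of_notMem (fun h4 => h (hs.1 h4.2.2)) _
      simp [this]
  simp only [h1]
  rw [lintegral_indicator_const measurableSet_Icc, Real.volume_Icc,
    ← ENNReal.ofReal_mul (by positivity)]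
  congr 1; ring

lemma atom_reduction (C : ℝ)
    (H : ∀ A L r, 0 < L → 0 < r → (r < 1 → Real.exp 2 * r ≤ L ∧ L ≤ Real.exp 8 * r) →
      (1 ≤ r → Real.exp (2 * r) ≤ L ∧ L ≤ Real.exp (8 * r)) → CAtom A L r →
      ∃ B : G → ℝ≥0∞, Measurable B ∧ (∀ x : G, 0 < x.2.2 → maxHeat A x ≤ B x) ∧
      ∫⁻ x, B x ∂ρG ≤ ENNReal.ofReal C) :
    ∀ A, IsAtomG A → ∃ B : G → ℝ≥0∞, Measurable B ∧ (∀ x : G, 0 < x.2.2 → maxHeat A x ≤ B x) ∧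
      ∫⁻ x, B x ∂ρG ≤ ENNReal.ofReal C := by
  rintro A ⟨hAi, R, ⟨c, L, r, hc, hL, hr, hR, h1, h2⟩, hs, hb, hm⟩
  set α := c.2.2 with hα
  have hα0 : α ≠ 0 := hc.ne'
  have hac : Measure.map (gMul c) ρG ≪ ρG := by
    rw [map_gMul c hc]
    exact Measure.smul_absolutelyContinuous
  have hAi' : Integrable (fun x => A (gMul c x)) ρG := by
    refine (integrable_map_measure (f := gMul c) (g := A) (hAi.1.mono_ac hac)
      (measurable_gMul c).aemeasurable).1 ?_
    rw [map_gMul c hc]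
    exact hAi.smul_measure ENNReal.ofReal_ne_top
  have hAm : ∫ x, A (gMul c x) ∂ρG = 0 := by
    rw [← integral_map (φ := gMul c) (measurable_gMul c).aemeasurable (hAi.1.mono_ac hac),
      map_gMul c hc, integral_smul_measure, hm, smul_zero]
  have hbd : ∀ᵐ y ∂ρG, |A y| ≤ (2 * r * L ^ 2)⁻¹ := by
    rw [hR, rho_box c L r hc hL hr, ← ENNReal.ofReal_inv_of_pos (by positivity), eLpNorm_exponent_top] at hb
    filter_upwards [ae_le_eLpNormEssSup (f := A) (μ := ρG)] with y hy
    have h3 := hy.trans hb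
    rw [← ofReal_norm, ENNReal.ofReal_le_ofReal_iff (by positivity)] at h3
    exact h3
  have hat : CAtom (fun x => α ^ 2 * A (gMul c x)) (L / α) r := by
    refine ⟨hAi'.const_mul _, ?_, ?_, ?_⟩
    · intro y hy
      show α ^ 2 * A (gMul c y) = 0
      rw [hs, mul_zero]
      intro hmem
      apply hy
      rw [hR] at hmem
      obtain ⟨⟨p1, p2⟩, ⟨p3, p4⟩, p5, p6⟩ := hmem
      simp only [gMul, ← hα] at p1 p2 p3 p4 p5 p6
      have e : L / α / 2 = L / 2 / α := by ring
      refine ⟨?_, ?_, ?_, ?_⟩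
      · rw [e, abs_le, neg_le, le_div_iff₀ hc, le_div_iff₀ hc]
        constructor <;> nlinarith
      · rw [e, abs_le, neg_le, le_div_iff₀ hc, le_div_iff₀ hc]
        constructor <;> nlinarith
      · exact le_of_mul_le_mul_left p5 hc
      · exact le_of_mul_le_mul_left p6 hc
    · have := ae_of_ae_map (measurable_gMul c).aemeasurable (hac.ae_le hbd)
      filter_upwards [this] with y hy
      rw [abs_mul, abs_of_pos (by positivity)]
      calc α ^ 2 * |A (gMul c y)| ≤ α ^ 2 * (2 * r * L ^ 2)⁻¹ := by gcongr
        _ = _ := by field_simp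
    · rw [integral_const_mul, hAm, mul_zero]
  obtain ⟨B, hBm, hB, hBi⟩ := H _ (L / α) r (by positivity) hr
    (fun h => ⟨by rw [le_div_iff₀ hc]; linarith [(h1 h).1], by rw [div_le_iff₀ hc]; linarith [(h1 h).2]⟩)
    (fun h => ⟨by rw [le_div_iff₀ hc]; linarith [(h2 h).1], by rw [div_le_iff₀ hc]; linarith [(h2 h).2]⟩)
    hat
  have hci : (0:ℝ) < (gInv c).2.2 := by simp only [gInv]; positivity
  refine ⟨fun x => ENNReal.ofReal (α ^ 2)⁻¹ * B (gMul (gInv c) x), by fun_prop, ?_, ?_⟩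
  · intro x hx
    have hx' : 0 < (gMul (gInv c) x).2.2 := mul_pos hci hx
    refine le_trans ?_ (mul_le_mul_right (hB _ hx') _)
    refine iSup₂_le fun t ht => ?_
    have e : convHeat (fun x => α ^ 2 * A (gMul c x)) t (gMul (gInv c) x) = α ^ 2 * convHeat A t x := by
      unfold convHeat
      rw [← integral_const_mul]
      refine integral_congr_ae (Eventually.of_forall fun y => ?_)
      simp only
      rw [← mul_assoc]
      congr 3
      simp only [gMul, gInv, ← hα]
      refine Prod.ext ?_ (Prod.ext ?_ ?_) <;> simp <;> field_simp <;> ring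
    have e2 : |convHeat A t x|
        = (α ^ 2)⁻¹ * |convHeat (fun x => α ^ 2 * A (gMul c x)) t (gMul (gInv c) x)| := by
      rw [e, abs_mul, abs_of_pos (show 0 < α ^ 2 by positivity)]; field_simp
    rw [e2, ENNReal.ofReal_mul (by positivity)]
    gcongr
    exact le_iSup₂_of_le t ht le_rfl
  · rw [lintegral_const_mul _ (by fun_prop), lintegral_gMul B hBm _ hci, ← mul_assoc,
      ← ENNReal.ofReal_mul (by positivity)]
    have : (α ^ 2)⁻¹ * ((gInv c).2.2 ^ 2)⁻¹ = 1 := by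
      simp only [gInv, ← hα]; field_simp
    rw [this]; simpa using hBi


lemma lintegral_Ioi_ftc {g g' : ℝ → ℝ} {a l : ℝ} (hcont : ContinuousWithinAt g (Ici a) a)
    (hderiv : ∀ x ∈ Ioi a, HasDerivAt g (g' x) x) (hpos : ∀ x ∈ Ioi a, 0 ≤ g' x)
    (hlim : Tendsto g atTop (nhds l)) :
    ∫⁻ x in Ioi a, ENNReal.ofReal (g' x) = ENNReal.ofReal (l - g a) := by
  rw [← integral_Ioi_of_hasDerivAt_of_nonneg hcont hderiv hpos hlim,
    ofReal_integral_eq_lintegral_ofReal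
      (integrableOn_Ioi_deriv_of_nonneg hcont hderiv hpos hlim)]
  exact (ae_restrict_iff' measurableSet_Ioi).2 (Eventually.of_forall hpos)

/-- The profile `s t^{-3/2} e^{-s²/4t}`. -/
def wT (t s : ℝ) : ℝ := s * t ^ (-(3 : ℝ)/2) * Real.exp (-(s ^ 2) / (4 * t))

/-- `S = √(D² - 4a²b²)`, with `D = a² + b² + q`. -/
def sS (a b q : ℝ) : ℝ := Real.sqrt ((a ^ 2 + b ^ 2 + q) ^ 2 - (2 * a * b) ^ 2)

lemma sqrt_cArg {a b q : ℝ} (ha : 0 < a) (hb : 0 < b) :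
    Real.sqrt (cArg a b q ^ 2 - 1) = sS a b q / (2 * a * b) := by
  have : cArg a b q ^ 2 - 1 = ((a ^ 2 + b ^ 2 + q) ^ 2 - (2 * a * b) ^ 2) / (2 * a * b) ^ 2 := by
    unfold cArg; field_simp
  rw [this, Real.sqrt_div' _ (by positivity), Real.sqrt_sq (by positivity), sS]

lemma kerH_eq {t a b q : ℝ} (ha : 0 < a) (hb : 0 < b) (h : 1 < cArg a b q) :
    kerH t a b q = 2 * cH * (wT t (Real.arcosh (cArg a b q)) / sS a b q) := by
  have h0 := (Real.arcosh_pos h).ne'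
  have hS : sS a b q ≠ 0 := by
    intro h1
    have := Real.sinh_arcosh h.le
    rw [sqrt_cArg ha hb, h1, zero_div, Real.sinh_eq_zero] at this
    exact h0 this
  unfold kerH phiT wT
  rw [if_neg h0, Real.sinh_arcosh h.le, sqrt_cArg ha hb]
  field_simp

lemma rpow_neg_three_half {t : ℝ} (ht : 0 < t) : t ^ (-(3 : ℝ)/2) = ((Real.sqrt t) ^ 3)⁻¹ := by
  rw [show (-(3:ℝ)/2) = -(3/2) by ring, Real.rpow_neg ht.le, Real.sqrt_eq_rpow,
    ← Real.rpow_natCast, ← Real.rpow_mul ht.le]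
  norm_num

lemma exp_aux (z : ℝ) (hz : 0 ≤ z) :
    z ^ 3 * (1 + z ^ 2 / 2) * Real.exp (-(z ^ 2 / 4)) ≤ 244 := by
  set Y := z ^ 2 / 4 with hY
  have hY0 : 0 ≤ Y := by positivity
  have h1 := Real.pow_div_factorial_le_exp Y hY0 1
  have h2 := Real.pow_div_factorial_le_exp Y hY0 2
  have h3 := Real.pow_div_factorial_le_exp Y hY0 3
  simp only [Nat.factorial] at h1 h2 h3
  norm_num at h1 h2 h3
  rw [Real.exp_neg, ← div_eq_mul_inv, div_le_iff₀ (Real.exp_pos _)]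
  have hz2 : z ^ 2 = 4 * Y := by rw [hY]; ring
  have e1 : z ^ 3 ≤ z ^ 2 + (z ^ 2) ^ 2 := by nlinarith [sq_nonneg (z * (z - 1)), sq_nonneg z, sq_nonneg (z^2)]
  have e2 : z ^ 5 ≤ (z ^ 2) ^ 2 + (z ^ 2) ^ 3 := by
    nlinarith [sq_nonneg (z ^ 2 * (z - 1)), sq_nonneg (z ^ 2), sq_nonneg (z ^ 3)]
  rw [hz2] at e1 e2
  nlinarith

lemma exp_aux' (z : ℝ) (hz : 0 ≤ z) : z ^ 3 * Real.exp (-(z ^ 2 / 4)) ≤ 244 := by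
  refine le_trans ?_ (exp_aux z hz)
  gcongr
  have : 0 ≤ z ^ 3 := by positivity
  nlinarith [mul_nonneg this (sq_nonneg z)]

lemma wT_nonneg {t s : ℝ} (ht : 0 < t) (hs : 0 ≤ s) : 0 ≤ wT t s := by unfold wT; positivity

lemma exp_conv {t s : ℝ} (ht : 0 < t) : -(s ^ 2) / (4 * t) = -((s / Real.sqrt t) ^ 2 / 4) := by
  rw [div_pow, Real.sq_sqrt ht.le]; field_simp

lemma wT_le {t s : ℝ} (ht : 0 < t) (hs : 0 < s) : wT t s ≤ 244 / s ^ 2 := by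
  have h := exp_aux' (s / Real.sqrt t) (by positivity)
  unfold wT
  rw [le_div_iff₀ (by positivity), exp_conv ht, rpow_neg_three_half ht]
  refine le_trans (le_of_eq ?_) h
  field_simp

lemma wT_lip {t s0 s s' : ℝ} (ht : 0 < t) (h0 : 0 < s0) (hs : s0 ≤ s) (hs' : s0 ≤ s') :
    |wT t s - wT t s'| ≤ 244 / s0 ^ 3 * |s - s'| := by
  have hd : ∀ x ∈ Ici s0, HasDerivWithinAt (wT t)
      (t ^ (-(3 : ℝ)/2) * Real.exp (-(x ^ 2) / (4 * t)) * (1 - x ^ 2 / (2 * t))) (Ici s0) x := by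
    intro x _
    have h1 : HasDerivAt (fun s : ℝ => -(s ^ 2) / (4 * t)) (-(2 * x) / (4 * t)) x := by
      simpa using ((hasDerivAt_pow 2 x).neg.div_const (4 * t))
    have h2 := ((hasDerivAt_id x).mul_const (t ^ (-(3 : ℝ)/2))).mul h1.exp
    refine (h2.congr_deriv ?_).hasDerivWithinAt
    simp only [id]
    field_simp
    ring
  have hb : ∀ x ∈ Ici s0,
      ‖t ^ (-(3 : ℝ)/2) * Real.exp (-(x ^ 2) / (4 * t)) * (1 - x ^ 2 / (2 * t))‖ ≤ 244 / s0 ^ 3 := by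
    intro x hx
    have hx0 : 0 < x := lt_of_lt_of_le h0 hx
    have h3 : 244 / x ^ 3 ≤ 244 / s0 ^ 3 := by
      have : s0 ≤ x := hx
      gcongr
    refine le_trans ?_ h3
    have h := exp_aux (x / Real.sqrt t) (by positivity)
    rw [le_div_iff₀ (by positivity), Real.norm_eq_abs, abs_mul, abs_of_pos (by positivity)]
    have h4 : |1 - x ^ 2 / (2 * t)| ≤ 1 + (x / Real.sqrt t) ^ 2 / 2 := by
      rw [div_pow, Real.sq_sqrt ht.le, abs_le]
      have : x ^ 2 / (2 * t) = x ^ 2 / t / 2 := by field_simp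
      rw [this]
      have : 0 ≤ x ^ 2 / t := by positivity
      constructor <;> linarith
    rw [exp_conv ht, rpow_neg_three_half ht]
    calc _ ≤ (√t ^ 3)⁻¹ * rexp (-((x / √t) ^ 2 / 4)) * (1 + (x / Real.sqrt t) ^ 2 / 2) * x ^ 3 := by
          gcongr
      _ = (x / √t) ^ 3 * (1 + (x / √t) ^ 2 / 2) * rexp (-((x / √t) ^ 2 / 4)) := by
          field_simp
      _ ≤ _ := h
  have := (convex_Ici s0).norm_image_sub_le_of_norm_hasDerivWithin_le hd hb hs' hs
  simpa [Real.norm_eq_abs] using this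

/-- Integral of the kernel over the horizontal variable. -/
lemma lintegral_kerH_q {t a b : ℝ} (ht : 0 < t) (ha : 0 < a) (hb : 0 < b) :
    ∫⁻ q in Ioi (0:ℝ), ENNReal.ofReal (kerH t a b q)
      = ENNReal.ofReal (4 * cH * (t * t ^ (-(3 : ℝ)/2)) *
          Real.exp (-((Real.log a - Real.log b) ^ 2) / (4 * t))) := by
  set K := 4 * cH * (t * t ^ (-(3 : ℝ)/2)) with hK
  set g : ℝ → ℝ := fun q => - (K * Real.exp (-(Real.arcosh (cArg a b q) ^ 2) / (4 * t))) with hg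
  have hcont : Continuous (fun q => cArg a b q) := by unfold cArg; fun_prop
  have hgt : ∀ q ∈ Ioi (0:ℝ), 1 < cArg a b q := by
    intro q hq
    unfold cArg
    rw [lt_div_iff₀ (by positivity)]
    have : 0 < q := hq
    nlinarith [sq_nonneg (a - b)]
  have h1 : ContinuousWithinAt g (Ici 0) 0 := by
    have : ContinuousWithinAt (fun q => Real.arcosh (cArg a b q)) (Ici 0) 0 :=
      (Real.continuousOn_arcosh _ (one_le_cArg ha hb le_rfl)).comp
        (hcont.continuousWithinAt) (fun q hq => one_le_cArg ha hb hq)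
    simp only [hg]
    exact (continuousWithinAt_const.mul (((this.pow 2).neg.div_const _).rexp)).neg
  have h2 : ∀ q ∈ Ioi (0:ℝ), HasDerivAt g (kerH t a b q) q := by
    intro q hq
    have h3 := hgt q hq
    have hS : Real.sqrt (cArg a b q ^ 2 - 1) ≠ 0 := by
      have : 0 < cArg a b q ^ 2 - 1 := by nlinarith
      positivity
    have hc : HasDerivAt (fun q => cArg a b q) (1 / (2 * a * b)) q := by
      unfold cArg
      simpa using ((hasDerivAt_id q).const_add (a ^ 2 + b ^ 2)).div_const (2 * a * b)
    have hd := (Real.hasDerivAt_arcosh h3).comp q hc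
    have := (((hd.pow 2).neg.div_const (4 * t)).exp.const_mul K).neg
    refine this.congr_deriv ?_
    rw [kerH_eq ha hb h3, wT, sqrt_cArg ha hb, hK]
    rw [sqrt_cArg ha hb] at hS
    have hS' : sS a b q ≠ 0 := by
      intro h; rw [h] at hS; simp at hS
    simp only [Function.comp, Pi.pow_apply, Pi.neg_apply]
    field_simp
    ring
  have h3 : Tendsto g atTop (nhds (-(K * 0))) := by
    have hlog : Tendsto (fun q => Real.log (cArg a b q)) atTop atTop := by
      refine Real.tendsto_log_atTop.comp ?_
      unfold cArg
      exact (tendsto_atTop_add_const_left _ _ tendsto_id).atTop_div_const (by positivity)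
    have hac : Tendsto (fun q => Real.arcosh (cArg a b q)) atTop atTop := by
      refine tendsto_atTop_mono' _ ?_ hlog
      filter_upwards [eventually_gt_atTop 0] with q hq
      have := hgt q hq
      unfold Real.arcosh
      exact Real.log_le_log (by linarith) (by linarith [Real.sqrt_nonneg (cArg a b q ^ 2 - 1)])
    refine (Tendsto.const_mul K ?_).neg
    refine Real.tendsto_exp_atBot.comp ?_
    have h5 := (((tendsto_pow_atTop two_ne_zero).comp hac).atTop_div_const
      (show 0 < 4 * t by positivity))
    refine (tendsto_neg_atTop_atBot.comp h5).congr fun q => ?_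
    simp [Function.comp, neg_div]
  rw [lintegral_Ioi_ftc h1 h2 (fun q hq => kerH_nonneg ht ha hb (le_of_lt hq)) h3]
  congr 1
  have h4 : Real.arcosh (cArg a b 0) = |Real.log a - Real.log b| := by
    have : cArg a b 0 = Real.cosh |Real.log a - Real.log b| := by
      rw [Real.cosh_abs, Real.cosh_eq, neg_sub, Real.exp_sub, Real.exp_sub, Real.exp_log ha,
        Real.exp_log hb, cArg]
      field_simp
      ring
    rw [this, Real.arcosh_cosh (abs_nonneg _)]
  simp only [hg, h4, sq_abs]
  ring

/-- The heat kernel has mass (at most) a constant. -/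
lemma lintegral_kerH (t : ℝ) (ht : 0 < t) (x : G) (hx : 0 < x.2.2) :
    ∫⁻ y, ENNReal.ofReal (kerH t x.2.2 y.2.2 (hq x y)) ∂ρG
      = ENNReal.ofReal (8 * (π * √π) * cH) := by
  have hm := measurable_kerH t
  rw [lintegral_rho _ (measurable_kerH' t x).ennreal_ofReal]
  have h1 : ∀ s : ℝ, ∫⁻ p : ℝ × ℝ, ENNReal.ofReal (kerH t x.2.2 (Real.exp s) (hq x (p.1, p.2, Real.exp s)))
      = ENNReal.ofReal (π * (4 * cH * (t * t ^ (-(3 : ℝ)/2)))) *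
          ENNReal.ofReal (Real.exp (-((Real.log x.2.2 - s) ^ 2) / (4 * t))) := by
    intro s
    have hm2 : Measurable (fun q => ENNReal.ofReal (kerH t x.2.2 (Real.exp s) q)) :=
      (hm.comp (f := fun q : ℝ => (x.2.2, Real.exp s, q)) (by fun_prop)).ennreal_ofReal
    have e := lintegral_sub_left_eq_self (μ := (volume : Measure (ℝ × ℝ)))
      (fun p : ℝ × ℝ => ENNReal.ofReal (kerH t x.2.2 (Real.exp s) (p.1 ^ 2 + p.2 ^ 2))) (x.1, x.2.1)
    have e2 := lintegral_radial (fun q => ENNReal.ofReal (kerH t x.2.2 (Real.exp s) q)) hm2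
    rw [e2, lintegral_kerH_q ht hx (Real.exp_pos s), Real.log_exp] at e
    refine e.trans ?_
    have := cH_pos
    rw [← ENNReal.ofReal_mul pi_pos.le, ← ENNReal.ofReal_mul (by positivity)]
    congr 1
    ring
  simp only [h1]
  rw [lintegral_const_mul _ (by fun_prop), lintegral_sub_left_eq_self (fun s : ℝ => ENNReal.ofReal (Real.exp (-(s ^ 2) / (4 * t))))]
  have h2 : ∫⁻ s : ℝ, ENNReal.ofReal (Real.exp (-(s ^ 2) / (4 * t))) = ENNReal.ofReal √(π * (4 * t)) := by
    have hb : 0 < 1 / (4 * t) := by positivity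
    have e := ofReal_integral_eq_lintegral_ofReal (integrable_exp_neg_mul_sq hb)
      (Eventually.of_forall fun s => (Real.exp_pos _).le)
    rw [integral_gaussian] at e
    rw [show π * (4 * t) = π / (1 / (4 * t)) by field_simp, e]
    refine lintegral_congr fun s => ?_
    congr 2
    field_simp
  have := cH_pos
  rw [h2, ← ENNReal.ofReal_mul (by positivity)]
  congr 1
  rw [rpow_neg_three_half ht, show π * (4 * t) = π * (2 ^ 2 * t) by ring, Real.sqrt_mul pi_pos.le,
    Real.sqrt_mul (by positivity), Real.sqrt_sq (by norm_num)]
  have h3 := Real.sq_sqrt ht.le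
  have h4 : 0 < √t := Real.sqrt_pos.2 ht
  nth_rw 1 [← h3]
  field_simp
  ring


lemma arcosh_eq_log {a b q : ℝ} (ha : 0 < a) (hb : 0 < b) :
    Real.arcosh (cArg a b q) = Real.log (((a ^ 2 + b ^ 2 + q) + sS a b q) / (2 * a * b)) := by
  rw [Real.arcosh, sqrt_cArg ha hb, cArg]
  congr 1; field_simp

lemma sS_nonneg (a b q : ℝ) : 0 ≤ sS a b q := Real.sqrt_nonneg _

lemma sS_le {a b q : ℝ} (hq : 0 ≤ q) : sS a b q ≤ a ^ 2 + b ^ 2 + q := by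
  unfold sS
  rw [Real.sqrt_le_left (by positivity)]
  nlinarith [sq_nonneg (2 * a * b)]

lemma sS_sq {a b q : ℝ} (hq : 0 ≤ q) :
    sS a b q ^ 2 = (a ^ 2 + b ^ 2 + q) ^ 2 - (2 * a * b) ^ 2 := by
  unfold sS
  rw [Real.sq_sqrt]
  have h : (a ^ 2 + b ^ 2 + q) ^ 2 - (2 * a * b) ^ 2 = ((a - b) ^ 2 + q) * ((a + b) ^ 2 + q) := by ring
  rw [h]; positivity

lemma log_le_arcosh {a b q : ℝ} (ha : 0 < a) (hb : 0 < b) (hq : 0 ≤ q) :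
    Real.log ((a ^ 2 + b ^ 2 + q) / (2 * a * b)) ≤ Real.arcosh (cArg a b q) := by
  rw [arcosh_eq_log ha hb]
  have := sS_nonneg a b q
  apply Real.log_le_log (by positivity)
  apply div_le_div_of_nonneg_right _ (by positivity)
  linarith

lemma arcosh_le_log {a b q : ℝ} (ha : 0 < a) (hb : 0 < b) (hq : 0 ≤ q) :
    Real.arcosh (cArg a b q) ≤ Real.log (2 * (a ^ 2 + b ^ 2 + q) / (2 * a * b)) := by
  rw [arcosh_eq_log ha hb]
  have := sS_nonneg a b q
  have := sS_le (a := a) (b := b) hq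
  apply Real.log_le_log (by positivity)
  gcongr
  linarith

lemma arcosh_ge_div {a b q : ℝ} (ha : 0 < a) (hb : 0 < b) (hq : 0 ≤ q) :
    sS a b q / (2 * (a ^ 2 + b ^ 2 + q)) ≤ Real.arcosh (cArg a b q) := by
  rw [arcosh_eq_log ha hb]
  have h1 := sS_nonneg a b q
  have h2 := sS_le (a := a) (b := b) hq
  have h3 : 2 * a * b ≤ a ^ 2 + b ^ 2 + q := by nlinarith [sq_nonneg (a - b)]
  have h4 : 0 < a ^ 2 + b ^ 2 + q := by positivity
  set D := a ^ 2 + b ^ 2 + q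
  set S := sS a b q
  have h5 : 0 < 2 * a * b := by positivity
  have := Real.one_sub_inv_le_log_of_pos (x := (D + S) / (2 * a * b)) (by positivity)
  refine le_trans ?_ this
  rw [inv_div, le_sub_iff_add_le]
  have : 2 * a * b / (D + S) ≤ D / (D + S) := by gcongr
  have e : D / (D + S) = 1 - S / (D + S) := by field_simp; ring
  have : S / (2 * D) ≤ S / (D + S) := by gcongr; linarith
  linarith

lemma ker_le {t a b q d0 S0 : ℝ} (ht : 0 < t) (ha : 0 < a) (hb : 0 < b) (h : 1 < cArg a b q)
    (hd0 : 0 < d0) (hd : d0 ≤ Real.arcosh (cArg a b q)) (hS0 : 0 < S0) (hS : S0 ≤ sS a b q) :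
    kerH t a b q ≤ 488 * cH / (d0 ^ 2 * S0) := by
  rw [kerH_eq ha hb h]
  have hc := cH_pos
  have h1 := wT_le ht (hd0.trans_le hd)
  have h2 : wT t (Real.arcosh (cArg a b q)) ≤ 244 / d0 ^ 2 := h1.trans (by gcongr)
  calc 2 * cH * (wT t (Real.arcosh (cArg a b q)) / sS a b q)
      ≤ 2 * cH * ((244 / d0 ^ 2) / S0) := by gcongr
    _ = _ := by field_simp; norm_num

lemma ker_diff {t a b q b' q' d0 S0 : ℝ} (ht : 0 < t) (ha : 0 < a) (hb : 0 < b) (hb' : 0 < b')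
    (h : 1 < cArg a b q) (h' : 1 < cArg a b' q')
    (hd0 : 0 < d0) (hd : d0 ≤ Real.arcosh (cArg a b q)) (hd' : d0 ≤ Real.arcosh (cArg a b' q'))
    (hS0 : 0 < S0) (hS : S0 ≤ sS a b q) (hS' : S0 ≤ sS a b' q') :
    |kerH t a b q - kerH t a b' q'| ≤
      488 * cH * (|Real.arcosh (cArg a b q) - Real.arcosh (cArg a b' q')| / (d0 ^ 3 * S0)
        + |sS a b q - sS a b' q'| / (d0 ^ 2 * S0 ^ 2)) := by
  rw [kerH_eq ha hb h, kerH_eq ha hb' h']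
  have hc := cH_pos
  have h2 : wT t (Real.arcosh (cArg a b' q')) ≤ 244 / d0 ^ 2 :=
    (wT_le ht (hd0.trans_le hd')).trans (by gcongr)
  have h3 := wT_lip ht hd0 hd hd'
  have h4 := wT_nonneg ht (hd0.le.trans hd')
  set d := Real.arcosh (cArg a b q)
  set d' := Real.arcosh (cArg a b' q')
  set S := sS a b q
  set S' := sS a b' q'
  have hSp : 0 < S := hS0.trans_le hS
  have hSp' : 0 < S' := hS0.trans_le hS'
  have e : 2 * cH * (wT t d / S) - 2 * cH * (wT t d' / S')
      = 2 * cH * ((wT t d - wT t d') / S + wT t d' * (S' - S) / (S * S')) := by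
    field_simp; ring
  rw [e, abs_mul, abs_of_pos (by positivity : 0 < 2 * cH)]
  calc 2 * cH * |(wT t d - wT t d') / S + wT t d' * (S' - S) / (S * S')|
      ≤ 2 * cH * (|wT t d - wT t d'| / S + wT t d' * |S - S'| / (S * S')) := by
        gcongr
        refine (abs_add_le _ _).trans ?_
        rw [abs_div, abs_div, abs_mul, abs_of_pos hSp, abs_of_nonneg h4,
          abs_of_pos (mul_pos hSp hSp'), abs_sub_comm S' S]
    _ ≤ 2 * cH * ((244 / d0 ^ 3 * |d - d'|) / S0 + (244 / d0 ^ 2) * |S - S'| / (S0 * S0)) := by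
        gcongr
    _ = _ := by field_simp; ring

/-- If `cosh d ≥ 2` then `S ≥ D/2`. -/
lemma half_le_sS {a b q : ℝ} (ha : 0 < a) (hb : 0 < b) (hq : 0 ≤ q)
    (h : 4 * a * b ≤ a ^ 2 + b ^ 2 + q) : (a ^ 2 + b ^ 2 + q) / 2 ≤ sS a b q := by
  unfold sS
  apply Real.le_sqrt_of_sq_le
  have h5 : 0 < a * b := by positivity
  nlinarith

lemma two_le_cArg {a b q : ℝ} (ha : 0 < a) (hb : 0 < b)
    (h : 4 * a * b ≤ a ^ 2 + b ^ 2 + q) : 2 ≤ cArg a b q := by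
  unfold cArg
  rw [le_div_iff₀ (by positivity)]; linarith

/-- Size estimate far from the diagonal. -/
lemma ker_far {t a b q d0 : ℝ} (ht : 0 < t) (ha : 0 < a) (hb : 0 < b) (hq : 0 ≤ q)
    (h : 4 * a * b ≤ a ^ 2 + b ^ 2 + q) (hd0 : 0 < d0)
    (hd : Real.exp d0 * (2 * a * b) ≤ a ^ 2 + b ^ 2 + q) :
    kerH t a b q ≤ 976 * cH / (d0 ^ 2 * (a ^ 2 + b ^ 2 + q)) := by
  have h1 := ker_le (d0 := d0) (S0 := (a ^ 2 + b ^ 2 + q) / 2) ht ha hb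
    (by linarith [two_le_cArg ha hb h]) hd0 ?_ (by positivity) (half_le_sS ha hb hq h)
  · refine h1.trans_eq ?_
    have : 0 < a ^ 2 + b ^ 2 + q := by positivity
    field_simp; ring
  · refine le_trans ?_ (log_le_arcosh ha hb hq)
    rw [Real.le_log_iff_exp_le (by positivity), le_div_iff₀ (by positivity)]
    exact hd



lemma two_le_exp_one : (2:ℝ) ≤ Real.exp 1 := by linarith [Real.add_one_le_exp 1]

lemma four_le_exp_two : (4:ℝ) ≤ Real.exp 2 := by
  have := two_le_exp_one
  rw [show (2:ℝ) = 1 + 1 by norm_num, Real.exp_add]; nlinarith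

lemma omega1 {t R L : ℝ} {x y : G} (ht : 0 < t) (hR : 1 ≤ R) (hx : 0 < x.2.2)
    (hv : Real.log x.2.2 ≤ -(20 * R)) (hy : InBox L R y) :
    kerH t x.2.2 y.2.2 (hq x y) ≤
      3904 * cH / ((Real.log x.2.2) ^ 2 * (Real.exp (-(2 * R)) + hq x y)) := by
  obtain ⟨-, -, hb1, hb2⟩ := hy
  have hb : 0 < y.2.2 := (Real.exp_pos _).trans_le hb1
  have hqn := hq_nonneg x y
  have hc := cH_pos
  set a := x.2.2 with ha
  set b := y.2.2
  set q := hq x y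
  set v := Real.log a with hvd
  have hav : a = Real.exp v := (Real.exp_log hx).symm
  have h4 : 4 * a ≤ b := by
    refine le_trans ?_ hb1
    calc 4 * a ≤ Real.exp 2 * Real.exp v := by rw [hav]; gcongr; exact four_le_exp_two
      _ = Real.exp (2 + v) := by rw [Real.exp_add]
      _ ≤ _ := Real.exp_le_exp.2 (by linarith)
  have h5 : Real.exp (-v / 2) * (2 * a) ≤ b := by
    refine le_trans ?_ hb1
    calc Real.exp (-v/2) * (2 * a) ≤ Real.exp (-v/2) * (Real.exp 1 * Real.exp v) := by
          rw [hav]; gcongr; exact two_le_exp_one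
      _ = Real.exp (1 + v / 2) := by rw [← Real.exp_add, ← Real.exp_add]; congr 1; ring
      _ ≤ _ := Real.exp_le_exp.2 (by linarith)
  have hb2' : Real.exp (-(2 * R)) ≤ b ^ 2 := by
    rw [show -(2 * R) = -R + -R by ring, Real.exp_add]
    nlinarith [Real.exp_pos (-R)]
  have := ker_far (t := t) (a := a) (b := b) (q := q) (d0 := -v / 2) ht hx hb hqn
    (by nlinarith [sq_nonneg a]) (by linarith) (by nlinarith [sq_nonneg a])
  refine this.trans ?_
  have hv2 : 0 < v ^ 2 := by nlinarith
  have : 3904 * cH / (v ^ 2 * (Real.exp (-(2 * R)) + q))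
    = 976 * cH / ((-v / 2) ^ 2 * (Real.exp (-(2 * R)) + q)) := by
    have : 0 < Real.exp (-(2 * R)) + q := by positivity
    have hv0 : v ≠ 0 := by intro h; rw [h] at hv2; simp at hv2
    field_simp; norm_num
  rw [this]
  have hv3 : 0 < (-v / 2) ^ 2 := by nlinarith
  gcongr
  nlinarith [sq_nonneg a]

lemma omega2 {t R L : ℝ} {x y : G} (ht : 0 < t) (hR : 1 ≤ R) (hx : 0 < x.2.2)
    (hv : 20 * R ≤ Real.log x.2.2) (hy : InBox L R y) :
    kerH t x.2.2 y.2.2 (hq x y) ≤ 976 * cH * Real.exp (-(2 * Real.log x.2.2)) := by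
  obtain ⟨-, -, hb1, hb2⟩ := hy
  have hb : 0 < y.2.2 := (Real.exp_pos _).trans_le hb1
  have hqn := hq_nonneg x y
  have hc := cH_pos
  set a := x.2.2 with ha
  set b := y.2.2
  set q := hq x y
  set v := Real.log a with hvd
  have hav : a = Real.exp v := (Real.exp_log hx).symm
  have h6 : Real.exp 2 * b ≤ a := by
    rw [hav]
    calc Real.exp 2 * b ≤ Real.exp 2 * Real.exp R := by gcongr
      _ = Real.exp (2 + R) := by rw [Real.exp_add]
      _ ≤ _ := Real.exp_le_exp.2 (by linarith)
  have h4 : 4 * b ≤ a := by nlinarith [four_le_exp_two]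
  have h5 : Real.exp 1 * (2 * b) ≤ a := by
    refine le_trans ?_ h6
    rw [show (2:ℝ) = 1 + 1 by norm_num, Real.exp_add]
    nlinarith [two_le_exp_one, mul_le_mul_of_nonneg_right two_le_exp_one (mul_pos (Real.exp_pos 1) hb).le]
  have := ker_far (t := t) (a := a) (b := b) (q := q) (d0 := 1) ht hx hb hqn
    (by nlinarith [sq_nonneg b]) (by linarith) (by nlinarith [sq_nonneg b])
  refine this.trans ?_
  rw [show -(2 * v) = -(v + v) by ring, Real.exp_neg, Real.exp_add, ← hav, ← div_eq_mul_inv,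
    one_pow, one_mul]
  gcongr
  nlinarith [sq_nonneg b]

lemma box_bounds {L R : ℝ} {x y : G} {s κ : ℝ} (hκ : 64 ≤ κ) (hL : 0 < L) (hs : κ * L ≤ s)
    (hsx : x.1 ^ 2 + x.2.1 ^ 2 = s ^ 2) (hy : InBox L R y) :
    s ^ 2 / 4 ≤ hq x y ∧ hq x y ≤ 3 * s ^ 2 ∧ |x.1| ≤ s ∧ |x.2.1| ≤ s := by
  obtain ⟨h1, h2, -, -⟩ := hy
  have hs0 : 0 < s := lt_of_lt_of_le (by positivity) hs
  have hsL : 64 * L ≤ s := le_trans (by gcongr) hs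
  have e1 : y.1 ^ 2 ≤ (L/2) ^ 2 := sq_le_sq' (abs_le.1 h1).1 (abs_le.1 h1).2
  have e2 : y.2.1 ^ 2 ≤ (L/2) ^ 2 := sq_le_sq' (abs_le.1 h2).1 (abs_le.1 h2).2
  have hL2 : (64 * L) ^ 2 ≤ s ^ 2 := by gcongr
  unfold hq
  refine ⟨?_, ?_, ?_, ?_⟩
  · nlinarith [sq_nonneg (x.1 - 2 * y.1), sq_nonneg (x.2.1 - 2 * y.2.1)]
  · nlinarith [sq_nonneg (x.1 + y.1), sq_nonneg (x.2.1 + y.2.1)]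
  · exact abs_le_of_sq_le_sq (by nlinarith [sq_nonneg x.2.1]) hs0.le
  · exact abs_le_of_sq_le_sq (by nlinarith [sq_nonneg x.1]) hs0.le

lemma hq_diff {L R : ℝ} {x y y' : G} {s : ℝ} (hL : 0 < L) (hs : L ≤ s)
    (h1 : |x.1| ≤ s) (h2 : |x.2.1| ≤ s) (hy : InBox L R y) (hy' : InBox L R y') :
    |hq x y - hq x y'| ≤ 6 * (L * s) := by
  obtain ⟨a1, a2, -, -⟩ := hy
  obtain ⟨b1, b2, -, -⟩ := hy'
  have key : ∀ u p p' : ℝ, |u| ≤ s → |p| ≤ L/2 → |p'| ≤ L/2 → |(u-p)^2 - (u-p')^2| ≤ 3 * (L * s) := by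
    intro u p p' hu hp hp'
    have e : (u-p)^2 - (u-p')^2 = (p' - p) * (2 * u - p - p') := by ring
    rw [e, abs_mul]
    have e1 : |p' - p| ≤ L := by
      rw [abs_le] at *; constructor <;> linarith
    have e2 : |2 * u - p - p'| ≤ 3 * s := by
      rw [abs_le] at *; constructor <;> linarith
    calc |p' - p| * |2 * u - p - p'| ≤ L * (3 * s) := by gcongr
      _ = _ := by ring
  unfold hq
  have k1 := key _ _ _ h1 a1 b1
  have k2 := key _ _ _ h2 a2 b2
  rw [abs_le] at *
  constructor <;> linarith



lemma arcosh_diff_far {a b b' q q' R K : ℝ} (ha : 0 < a) (hb : Real.exp (-R) ≤ b) (hb' : Real.exp (-R) ≤ b')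
    (hb2 : b ≤ Real.exp R) (hR : 1 ≤ R) (hq : 0 ≤ q) (hq' : 0 ≤ q')
    (hK : 0 < K) (h1 : K / 4 ≤ a ^ 2 + b ^ 2 + q) (h2 : a ^ 2 + b' ^ 2 + q' ≤ 4 * K) :
    Real.arcosh (cArg a b' q') - Real.arcosh (cArg a b q) ≤ 6 * R := by
  have hb0 := (Real.exp_pos _).trans_le hb
  have hb0' := (Real.exp_pos _).trans_le hb'
  have e1 := log_le_arcosh ha hb0 hq
  have e2 := arcosh_le_log ha hb0' hq'
  set D := a ^ 2 + b ^ 2 + q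
  set D' := a ^ 2 + b' ^ 2 + q'
  have hD : 0 < D := lt_of_lt_of_le (by positivity) h1
  have hD' : 0 < D' := by positivity
  have : Real.log (2 * D' / (2 * a * b')) ≤ 6 * R + Real.log (D / (2 * a * b)) := by
    rw [← Real.log_exp (6 * R), ← Real.log_mul (by positivity) (by positivity)]
    apply Real.log_le_log (by positivity)
    have hbb : b ≤ Real.exp (2 * R) * b' := by
      calc b ≤ Real.exp R := hb2
        _ = Real.exp (2 * R) * Real.exp (-R) := by rw [← Real.exp_add]; congr 1; ring
        _ ≤ _ := by gcongr
    have h32 : 32 ≤ Real.exp (4 * R) := by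
      have : (2:ℝ).exp ≤ Real.exp (2 * R) := Real.exp_le_exp.2 (by linarith)
      have h7 : (7:ℝ) ≤ Real.exp 2 := by
        have := Real.exp_one_gt_d9
        rw [show (2:ℝ) = 1 + 1 by norm_num, Real.exp_add]; nlinarith
      rw [show 4 * R = 2 * R + 2 * R by ring, Real.exp_add]; nlinarith
    rw [div_le_iff₀ (by positivity), show 6 * R = 4 * R + 2 * R by ring, Real.exp_add]
    have : Real.exp (4 * R) * Real.exp (2 * R) * (D / (2 * a * b)) * (2 * a * b')
        = (Real.exp (4 * R) * D) * ((Real.exp (2 * R) * b') / b) := by field_simp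
    rw [this]
    have g1 : 1 ≤ (Real.exp (2 * R) * b') / b := by rwa [le_div_iff₀ hb0, one_mul]
    have g2 : 2 * D' ≤ Real.exp (4 * R) * D := by nlinarith
    calc 2 * D' ≤ Real.exp (4 * R) * D * 1 := by rw [mul_one]; exact g2
      _ ≤ _ := by gcongr
  linarith

lemma sS_diff_far {a b b' q q' Q W : ℝ} (hqn : 0 ≤ q) (hqn' : 0 ≤ q') (hQ0 : 0 < Q) (hW : 0 ≤ W)
    (k3 : a ^ 2 ≤ Q)
    (g2 : a ^ 2 + b ^ 2 + q ≤ 4 * Q) (g2' : a ^ 2 + b' ^ 2 + q' ≤ 4 * Q)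
    (g5 : Q / 8 ≤ sS a b q) (g5' : Q / 8 ≤ sS a b' q')
    (hbb : |b ^ 2 - b' ^ 2| ≤ W) (hqd : |q - q'| ≤ 6 * W) :
    |sS a b q - sS a b' q'| ≤ 240 * W := by
  have hsum : Q / 4 ≤ sS a b q + sS a b' q' := by linarith
  have e : (sS a b q - sS a b' q') * (sS a b q + sS a b' q')
      = ((b ^ 2 - b' ^ 2) + (q - q')) * ((a ^ 2 + b ^ 2 + q) + (a ^ 2 + b' ^ 2 + q'))
        - 4 * a ^ 2 * (b ^ 2 - b' ^ 2) := by
    have k1 := sS_sq (a := a) (b := b) hqn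
    have k2 := sS_sq (a := a) (b := b') hqn'
    linear_combination k1 - k2
  have e2 : |sS a b q - sS a b' q'| * (Q / 4) ≤ 240 * W * (Q / 4) := by
    calc |sS a b q - sS a b' q'| * (Q / 4)
        ≤ |sS a b q - sS a b' q'| * (sS a b q + sS a b' q') := by gcongr
      _ = |(sS a b q - sS a b' q') * (sS a b q + sS a b' q')| := by
          rw [abs_mul, abs_of_nonneg (a := sS a b q + sS a b' q') (by linarith)]
      _ ≤ |(b ^ 2 - b' ^ 2) + (q - q')| * |(a ^ 2 + b ^ 2 + q) + (a ^ 2 + b' ^ 2 + q')|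
          + 4 * a ^ 2 * |b ^ 2 - b' ^ 2| := by
          rw [e]
          refine (abs_sub _ _).trans ?_
          rw [abs_mul, abs_mul, abs_of_nonneg (a := 4 * a ^ 2) (by positivity)]
      _ ≤ (W + 6 * W) * (4 * Q + 4 * Q) + 4 * Q * W := by
          have k1 : |(b ^ 2 - b' ^ 2) + (q - q')| ≤ W + 6 * W :=
            (abs_add_le _ _).trans (by linarith)
          have k2 : |(a ^ 2 + b ^ 2 + q) + (a ^ 2 + b' ^ 2 + q')| ≤ 4 * Q + 4 * Q := by
            rw [abs_of_nonneg (by positivity : 0 ≤ (a ^ 2 + b ^ 2 + q) + (a ^ 2 + b' ^ 2 + q'))]; linarith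
          gcongr
      _ = 240 * W * (Q / 4) := by ring
  exact le_of_mul_le_mul_right e2 (by positivity)

set_option maxHeartbeats 1000000 in
lemma omega3 {t R L κ s : ℝ} {x y y' : G} (ht : 0 < t) (hR : 1 ≤ R) (hL : Real.exp (2 * R) ≤ L)
    (hκ : 64 ≤ κ) (hx : 0 < x.2.2) (hs : κ * L ≤ s) (hsx : x.1 ^ 2 + x.2.1 ^ 2 = s ^ 2)
    (hy : InBox L R y) (hy' : InBox L R y') :
    |kerH t x.2.2 y.2.2 (hq x y) - kerH t x.2.2 y'.2.2 (hq x y')| ≤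
      488 * cH / ((Real.log s) ^ 2 / 4 + (Real.log x.2.2 - Real.log s) ^ 2) *
        (96 * R / (Real.log s * s ^ 2) + 15360 * L / s ^ 3) := by
  have hL0 : 0 < L := (Real.exp_pos _).trans_le hL
  have hs0 : 0 < s := lt_of_lt_of_le (by positivity) hs
  have hLs : 64 * L ≤ s := le_trans (by gcongr) hs
  obtain ⟨q1, q2, hx1, hx2⟩ := box_bounds hκ hL0 hs hsx hy
  obtain ⟨q1', q2', -, -⟩ := box_bounds hκ hL0 hs hsx hy'
  have hqd := hq_diff hL0 (by linarith) hx1 hx2 hy hy'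
  obtain ⟨-, -, hb1, hb2⟩ := hy
  obtain ⟨-, -, hb1', hb2'⟩ := hy'
  have hb : 0 < y.2.2 := (Real.exp_pos _).trans_le hb1
  have hb' : 0 < y'.2.2 := (Real.exp_pos _).trans_le hb1'
  have hqn := hq_nonneg x y
  have hqn' := hq_nonneg x y'
  have hc := cH_pos
  set a := x.2.2 with ha
  set b := y.2.2
  set b' := y'.2.2
  set q := hq x y
  set q' := hq x y'
  set v := Real.log a with hvd
  set p := Real.log s with hpd
  have hav : a = Real.exp v := (Real.exp_log hx).symm
  have hsp : s = Real.exp p := (Real.exp_log hs0).symm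
  have hp : 1 ≤ p := by
    rw [hpd, Real.le_log_iff_exp_le hs0]
    have : Real.exp 1 ≤ Real.exp (2 * R) := Real.exp_le_exp.2 (by linarith)
    linarith
  have hRL : Real.exp R ^ 2 ≤ L := by
    rw [← Real.exp_nat_mul]; exact_mod_cast hL
  have hR1 : 1 ≤ Real.exp R := Real.one_le_exp (by linarith)
  have hRL1 : Real.exp R ≤ L := by nlinarith only [hRL, hR1]
  have hE : 8 * Real.exp R ≤ Real.exp (p / 2) := by
    refine (sq_le_sq₀ (by positivity) (Real.exp_pos _).le).1 ?_
    rw [mul_pow, ← Real.exp_nat_mul (p/2)]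
    have : ((2:ℕ):ℝ) * (p / 2) = p := by push_cast; ring
    rw [this, ← hsp]; linarith
  set Q := a ^ 2 + s ^ 2 with hQ
  have hQ0 : 0 < Q := by positivity
  -- generic bounds
  have gen : ∀ β θ : ℝ, 0 < β → β ≤ Real.exp R → s ^ 2 / 4 ≤ θ → θ ≤ 3 * s ^ 2 →
      Q / 4 ≤ a ^ 2 + β ^ 2 + θ ∧ a ^ 2 + β ^ 2 + θ ≤ 4 * Q ∧ 4 * a * β ≤ a ^ 2 + β ^ 2 + θ ∧
      p / 2 + |v - p| ≤ Real.arcosh (cArg a β θ) ∧ Q / 8 ≤ sS a β θ := by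
    intro β θ hβ hβ2 hθ1 hθ2
    have hθ0 : 0 ≤ θ := le_trans (by positivity) hθ1
    have g1 : Q / 4 ≤ a ^ 2 + β ^ 2 + θ := by rw [hQ]; linarith [sq_nonneg a, sq_nonneg β]
    have hβs : 64 * β ≤ s := by linarith
    have g2 : a ^ 2 + β ^ 2 + θ ≤ 4 * Q := by
      have k1 : β ^ 2 ≤ s ^ 2 := by gcongr; linarith
      rw [hQ]; linarith [sq_nonneg a, sq_nonneg s]
    have g3 : 4 * a * β ≤ a ^ 2 + β ^ 2 + θ := by
      have k1 : a * (64 * β) ≤ a * s := mul_le_mul_of_nonneg_left hβs hx.le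
      have k2 := sq_nonneg (a - s)
      have k3 := sq_nonneg β
      have k4 := sq_nonneg a
      have k5 := sq_nonneg s
      nlinarith only [k1, k2, k3, k4, k5, hθ1]
    refine ⟨g1, g2, g3, ?_, le_trans (by linarith) (half_le_sS hx hβ hθ0 g3)⟩
    refine le_trans ?_ (log_le_arcosh hx hβ hθ0)
    rw [Real.le_log_iff_exp_le (by positivity), le_div_iff₀ (by positivity)]
    have hEβ : 8 * β ≤ Real.exp (p / 2) := by linarith
    rcases le_total p v with h | h
    · rw [abs_of_nonneg (by linarith)]
      have : Real.exp (p / 2 + (v - p)) * (2 * a * β) * Real.exp (p / 2) = a ^ 2 * (2 * β) := by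
        have : Real.exp (p / 2 + (v - p)) * (2 * a * β) * Real.exp (p / 2)
          = (Real.exp (p / 2 + (v - p)) * Real.exp (p/2)) * (2 * a * β) := by ring
        rw [this, ← Real.exp_add, show p / 2 + (v - p) + p / 2 = v by ring, ← hav]; ring
      have h8 : Real.exp (p / 2 + (v - p)) * (2 * a * β) ≤ a ^ 2 / 4 := by
        have hep := Real.exp_pos (p/2)
        rw [← mul_le_mul_iff_left₀ hep, this]
        nlinarith only [mul_le_mul_of_nonneg_left hEβ (sq_nonneg a)]
      linarith [sq_nonneg a, sq_nonneg β]
    · rw [abs_of_nonpos (by linarith)]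
      have : Real.exp (p / 2 + -(v - p)) * (2 * a * β) * Real.exp (p / 2) = s ^ 2 * (2 * β) := by
        have : Real.exp (p / 2 + -(v - p)) * (2 * a * β) * Real.exp (p / 2)
          = (Real.exp (p / 2 + -(v - p)) * Real.exp v * Real.exp (p/2)) * (2 * β) := by
            rw [← hav]; ring
        rw [this, ← Real.exp_add, ← Real.exp_add, show p / 2 + -(v - p) + v + p / 2 = p + p by ring,
          Real.exp_add, ← hsp]; ring
      have h8 : Real.exp (p / 2 + -(v - p)) * (2 * a * β) ≤ s ^ 2 / 4 := by
        have hep := Real.exp_pos (p/2)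
        rw [← mul_le_mul_iff_left₀ hep, this]
        nlinarith only [mul_le_mul_of_nonneg_left hEβ (sq_nonneg s)]
      linarith [sq_nonneg a, sq_nonneg β]
  obtain ⟨g1, g2, g3, g4, g5⟩ := gen b q hb hb2 q1 q2
  obtain ⟨g1', g2', g3', g4', g5'⟩ := gen b' q' hb' hb2' q1' q2'
  have hd0 : 0 < p / 2 + |v - p| := by positivity
  have := ker_diff ht hx hb hb' (by linarith [two_le_cArg hx hb g3])
    (by linarith [two_le_cArg hx hb' g3']) hd0 g4 g4' (by positivity : 0 < Q / 8) g5 g5'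
  refine this.trans ?_
  have hdd : |Real.arcosh (cArg a b q) - Real.arcosh (cArg a b' q')| ≤ 6 * R := by
    rw [abs_le]
    have := arcosh_diff_far hx hb1 hb1' hb2 hR hqn hqn' hQ0 g1 g2'
    have := arcosh_diff_far hx hb1' hb1 hb2' hR hqn' hqn hQ0 g1' g2
    constructor <;> linarith
  have hbb : |b ^ 2 - b' ^ 2| ≤ L * s := by
    have k1 : b ^ 2 ≤ L := le_trans (by gcongr) hRL
    have k2 : b' ^ 2 ≤ L := le_trans (by gcongr) hRL
    have k3 : L * 1 ≤ L * s := by gcongr; linarith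
    have k4 := sq_nonneg b
    have k5 := sq_nonneg b'
    rw [abs_le]; constructor <;> linarith
  have hSS := sS_diff_far hqn hqn' hQ0 (by positivity : 0 ≤ L * s) (by rw [hQ]; linarith [sq_nonneg s]) g2 g2' g5 g5' hbb hqd
  set X := p ^ 2 / 4 + (v - p) ^ 2 with hX
  have hX0 : 0 < X := by positivity
  have hdX : X ≤ (p / 2 + |v - p|) ^ 2 := by
    rw [hX, ← sq_abs (v - p)]
    have k : 0 ≤ p * |v - p| := by positivity
    nlinarith only [k]
  have hdX3 : p / 2 * X ≤ (p / 2 + |v - p|) ^ 3 := by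
    rw [pow_succ' _ 2]
    gcongr
    linarith [abs_nonneg (v - p)]
  have hsQ : s ^ 2 ≤ Q := by rw [hQ]; linarith [sq_nonneg a]
  calc 488 * cH * (|Real.arcosh (cArg a b q) - Real.arcosh (cArg a b' q')| / ((p / 2 + |v - p|) ^ 3 * (Q/8))
        + |sS a b q - sS a b' q'| / ((p / 2 + |v - p|) ^ 2 * (Q/8) ^ 2))
      ≤ 488 * cH * (6 * R / ((p / 2 * X) * (s ^ 2 / 8))
        + 240 * (L * s) / (X * (s ^ 2 /8) ^ 2)) := by gcongr
    _ = _ := by field_simp; ring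



lemma cs3 {x1 x2 x3 y1 y2 y3 l h : ℝ} (hl : 0 ≤ l) (hh : 0 ≤ h)
    (h1 : x1 ^ 2 + x2 ^ 2 + x3 ^ 2 = l ^ 2) (h2 : y1 ^ 2 + y2 ^ 2 + y3 ^ 2 ≤ h ^ 2) :
    |x1 * y1 + x2 * y2 + x3 * y3| ≤ l * h := by
  apply abs_le_of_sq_le_sq _ (by positivity)
  have e : (x1 * y1 + x2 * y2 + x3 * y3) ^ 2 ≤ (x1 ^ 2 + x2 ^ 2 + x3 ^ 2) * (y1 ^ 2 + y2 ^ 2 + y3 ^ 2) := by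
    nlinarith [sq_nonneg (x1 * y2 - x2 * y1), sq_nonneg (x1 * y3 - x3 * y1),
      sq_nonneg (x2 * y3 - x3 * y2)]
  refine e.trans ?_
  rw [h1, mul_pow]
  gcongr

lemma sS_sq' {a b q : ℝ} (hq : 0 ≤ q) :
    sS a b q ^ 2 = ((a - b) ^ 2 + q) * ((a + b) ^ 2 + q) := by
  rw [sS_sq hq]; ring

/-- Lower bounds near the diagonal. -/
lemma near_low {a b q l N : ℝ} (ha : 0 < a) (hb : 0 < b) (hq : 0 ≤ q) (hN : 1 ≤ N) (hl : 0 < l)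
    (haN : a ≤ N) (hbN : b ≤ N) (haN' : 1 ≤ N * a) (hlN : l ≤ N)
    (hE : l ^ 2 / 4 ≤ (a - b) ^ 2 + q) (hE2 : (a - b) ^ 2 + q ≤ 3 * l ^ 2) :
    1 < cArg a b q ∧ l / (2 * N) ≤ sS a b q ∧ l / (20 * N ^ 3) ≤ Real.arcosh (cArg a b q)
      ∧ 1 ≤ N ^ 2 * (a ^ 2 + b ^ 2 + q) := by
  have hN0 : 0 < N := by linarith
  have hl2 : 0 < l ^ 2 := by positivity
  have h1 : l / (2 * N) ≤ sS a b q := by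
    refine (sq_le_sq₀ (by positivity) (sS_nonneg _ _ _)).1 ?_
    rw [sS_sq' hq]
    have : (l / (2 * N)) ^ 2 = (l ^ 2 / 4) * (1 / N ^ 2) := by field_simp; norm_num
    rw [this]
    have hp : 1 / N ^ 2 ≤ (a + b) ^ 2 + q := by
      rw [div_le_iff₀ (by positivity)]
      have k1 : 1 ^ 2 ≤ (N * a) ^ 2 := by gcongr
      have k2 : (N * a) ^ 2 ≤ ((a + b) ^ 2 + q) * N ^ 2 := by
        rw [mul_pow, mul_comm]
        gcongr
        nlinarith [mul_pos ha hb, sq_nonneg b]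
      linarith
    gcongr
  have hD : a ^ 2 + b ^ 2 + q ≤ 5 * N ^ 2 := by
    have e : a ^ 2 + b ^ 2 + q = ((a - b) ^ 2 + q) + 2 * (a * b) := by ring
    have k1 : a * b ≤ N * N := by gcongr
    have k2 : l ^ 2 ≤ N ^ 2 := by gcongr
    rw [e]; nlinarith
  have hD0 : 0 < a ^ 2 + b ^ 2 + q := by positivity
  refine ⟨?_, h1, ?_, ?_⟩
  · unfold cArg
    rw [lt_div_iff₀ (by positivity)]; nlinarith
  · refine le_trans ?_ (arcosh_ge_div ha hb hq)
    have := sS_nonneg a b q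
    calc l / (20 * N ^ 3) = (l / (2 * N)) / (2 * (5 * N ^ 2)) := by field_simp; norm_num
      _ ≤ _ := by gcongr
  · have k1 : 1 ^ 2 ≤ (N * a) ^ 2 := by gcongr
    have k2 : 0 ≤ N ^ 2 * (b ^ 2 + q) := by positivity
    nlinarith

set_option maxHeartbeats 1000000 in
lemma near_pure {t a b x1 x2 y1 y2 l h N : ℝ} (ht : 0 < t) (ha : 0 < a) (hb : 0 < b) (hN : 1 ≤ N)
    (hl : 0 < l) (hh : 0 ≤ h) (haN : a ≤ N) (hbN : b ≤ N) (haN' : 1 ≤ N * a) (hlN : l ≤ N)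
    (hlx : x1 ^ 2 + x2 ^ 2 + (a - 1) ^ 2 = l ^ 2)
    (hhy : y1 ^ 2 + y2 ^ 2 + (b - 1) ^ 2 ≤ h ^ 2) (hhl : 4 * h ≤ l) (hlog : |Real.log b| ≤ h) :
    |kerH t a b ((x1 - y1) ^ 2 + (x2 - y2) ^ 2) - kerH t a 1 (x1 ^ 2 + x2 ^ 2)| ≤
      488 * cH * (520000 * N ^ 15) * h / l ^ 4 := by
  have hc := cH_pos
  have hcs := cs3 hl.le hh hlx hhy
  have hN0 : 0 < N := by linarith
  have hbd : |b - 1| ≤ h := abs_le_of_sq_le_sq (by linarith [sq_nonneg y1, sq_nonneg y2]) hh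
  set q := (x1 - y1) ^ 2 + (x2 - y2) ^ 2 with hqd
  set q' := x1 ^ 2 + x2 ^ 2 with hqd'
  have hq0 : 0 ≤ q := by positivity
  have hq0' : 0 ≤ q' := by positivity
  set E := (a - b) ^ 2 + q with hE
  have hE' : (a - 1) ^ 2 + q' = l ^ 2 := by linarith
  set Y := y1 ^ 2 + y2 ^ 2 + (b - 1) ^ 2 with hY
  have hY0 : 0 ≤ Y := by positivity
  have hEl : E - l ^ 2 = -2 * (x1 * y1 + x2 * y2 + (a - 1) * (b - 1)) + Y := by
    rw [← hlx, hE, hqd, hY]; ring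
  set Z := x1 * y1 + x2 * y2 + (a - 1) * (b - 1)
  have hZ := abs_le.1 hcs
  have hlh : 0 ≤ l * h := by positivity
  have hh2 : h ^ 2 ≤ l * h / 2 := by nlinarith only [hh, hhl, hl]
  have hEd : |E - l ^ 2| ≤ 5 / 2 * (l * h) := by
    rw [hEl, abs_le]; constructor <;> linarith [hZ.1, hZ.2]
  have hlh2 : l * h ≤ l ^ 2 / 4 := by nlinarith only [hh, hhl, hl]
  have hEu : E ≤ 3 * l ^ 2 := by linarith [(abs_le.1 hEd).2, sq_nonneg l]
  have hEl' : l ^ 2 / 4 ≤ E := by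
    linarith [hZ.2, sq_nonneg l]
  obtain ⟨c1, c2, c3, c4⟩ := near_low ha hb hq0 hN hl haN hbN haN' hlN hEl' hEu
  obtain ⟨c1', c2', c3', c4'⟩ := near_low (b := 1) (q := q') ha one_pos hq0' hN hl haN hN haN' hlN
    (by rw [hE']; linarith [sq_nonneg l]) (by rw [hE']; linarith [sq_nonneg l])
  have := ker_diff ht ha hb one_pos c1 c1' (by positivity) c3 c3' (by positivity) c2 c2'
  refine this.trans ?_
  set D := a ^ 2 + b ^ 2 + q with hD
  set D' := a ^ 2 + 1 ^ 2 + q' with hD'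
  set S := sS a b q with hS
  set S' := sS a 1 q' with hS'
  have hDD : |D - D'| ≤ 5 * N * h := by
    have e : D - D' = (E - l ^ 2) + 2 * a * (b - 1) := by rw [← hE', hE]; ring
    rw [e]
    calc _ ≤ |E - l ^ 2| + |2 * a * (b - 1)| := abs_add_le _ _
      _ = |E - l ^ 2| + 2 * a * |b - 1| := by rw [abs_mul, abs_of_pos (by positivity : 0 < 2 * a)]
      _ ≤ 5 / 2 * (N * h) + 2 * N * h := by
        gcongr
        exact hEd.trans (by gcongr)
      _ ≤ _ := by nlinarith [mul_nonneg hN0.le hh]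
  have hSS : |S - S'| ≤ 24 * N ^ 3 * h := by
    set P := (a + b) ^ 2 + q with hP
    set P' := (a + 1) ^ 2 + q' with hP'
    have eP : P - P' = (E - l ^ 2) + 4 * a * (b - 1) := by rw [← hE', hE]; ring
    have hPP : |P - P'| ≤ 13 / 2 * (N * h) := by
      rw [eP]
      calc _ ≤ |E - l ^ 2| + |4 * a * (b - 1)| := abs_add_le _ _
        _ = |E - l ^ 2| + 4 * a * |b - 1| := by rw [abs_mul, abs_of_pos (by positivity : 0 < 4 * a)]
        _ ≤ 5 / 2 * (N * h) + 4 * N * h := by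
          gcongr
          exact hEd.trans (by gcongr)
        _ = _ := by ring
    have hPN : P ≤ 7 * N ^ 2 := by
      have e : P = E + 4 * (a * b) := by rw [hE]; ring
      have k1 : a * b ≤ N * N := by gcongr
      have k2 : l ^ 2 ≤ N ^ 2 := by gcongr
      rw [e]; linarith [sq_nonneg N]
    have hP0 : 0 ≤ P := by positivity
    have hsq : S ^ 2 = E * P := sS_sq' hq0
    have hsq' : S' ^ 2 = l ^ 2 * P' := by rw [← hE']; exact sS_sq' hq0'
    have e : (S - S') * (S + S') = (E - l ^ 2) * P + l ^ 2 * (P - P') := by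
      linear_combination hsq - hsq'
    have hsum : l / N ≤ S + S' := by
      have : l / N = l / (2 * N) + l / (2 * N) := by field_simp; norm_num
      linarith
    have e2 : |S - S'| * (l / N) ≤ 24 * N ^ 3 * h * (l / N) := by
      calc |S - S'| * (l / N) ≤ |S - S'| * (S + S') := by gcongr
        _ = |(S - S') * (S + S')| := by
            rw [abs_mul, abs_of_nonneg (a := S + S') (le_trans (by positivity) hsum)]
        _ ≤ |E - l ^ 2| * P + l ^ 2 * |P - P'| := by
            rw [e]
            refine (abs_add_le _ _).trans ?_
            rw [abs_mul, abs_mul, abs_of_nonneg hP0, abs_of_nonneg (sq_nonneg l)]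
        _ ≤ 5 / 2 * (l * h) * (7 * N ^ 2) + (l * N) * (13 / 2 * (N * h)) := by
            gcongr
            rw [sq]; gcongr
        _ = 24 * (l * h * N ^ 2) := by ring
        _ = _ := by field_simp
    exact le_of_mul_le_mul_right e2 (by positivity)
  have hD0 : 0 < D := by positivity
  have hD0' : 0 < D' := by positivity
  have hS0 : 0 ≤ S := sS_nonneg _ _ _
  have hS0' : 0 ≤ S' := sS_nonneg _ _ _
  have hdd : |Real.arcosh (cArg a b q) - Real.arcosh (cArg a 1 q')| ≤ 30 * N ^ 5 * h := by
    rw [arcosh_eq_log ha hb, arcosh_eq_log ha one_pos, ← hD, ← hD', ← hS, ← hS',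
      Real.log_div (by positivity) (by positivity), Real.log_div (by positivity) (by positivity),
      Real.log_mul (by positivity) hb.ne', mul_one]
    have e : Real.log (D + S) - (Real.log (2 * a) + Real.log b) - (Real.log (D' + S') - Real.log (2 * a))
      = (Real.log (D + S) - Real.log (D' + S')) - Real.log b := by ring
    rw [e]
    have lg : ∀ U V : ℝ, 0 < U → 1 ≤ N ^ 2 * V → 0 < V → |U - V| ≤ 29 * N ^ 3 * h →
        Real.log U - Real.log V ≤ 29 * N ^ 5 * h := by
      intro U V hU hV hV0 hUV
      rw [← Real.log_div hU.ne' hV0.ne']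
      have := Real.log_le_sub_one_of_pos (x := U / V) (by positivity)
      refine this.trans ?_
      have e : U / V - 1 = (U - V) / V := by field_simp
      rw [e, div_le_iff₀ hV0]
      calc U - V ≤ 29 * N ^ 3 * h := (le_abs_self _).trans hUV
        _ = 29 * N ^ 3 * h * 1 := by ring
        _ ≤ 29 * N ^ 3 * h * (N ^ 2 * V) := by gcongr
        _ = _ := by ring
    have hUV : |(D + S) - (D' + S')| ≤ 29 * N ^ 3 * h := by
      have e : (D + S) - (D' + S') = (D - D') + (S - S') := by ring
      rw [e]
      refine (abs_add_le _ _).trans ?_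
      have : N ≤ N ^ 3 := le_self_pow₀ hN (by norm_num)
      have : N * h ≤ N ^ 3 * h := by gcongr
      linarith
    have m1 : 1 ≤ N ^ 2 * (D + S) := c4.trans (by gcongr; linarith)
    have m2 : 1 ≤ N ^ 2 * (D' + S') := c4'.trans (by gcongr; linarith)
    have l1 := lg _ _ (by positivity : 0 < D + S) m2 (by positivity) hUV
    have l2 := lg _ _ (by positivity : 0 < D' + S') m1 (by positivity) (by rwa [abs_sub_comm])
    have : h ≤ N ^ 5 * h := le_mul_of_one_le_left hh (one_le_pow₀ hN)
    have := abs_le.1 hlog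
    rw [abs_le]; constructor <;> linarith
  calc 488 * cH * (|Real.arcosh (cArg a b q) - Real.arcosh (cArg a 1 q')|
          / ((l / (20 * N ^ 3)) ^ 3 * (l / (2 * N)))
        + |S - S'| / ((l / (20 * N ^ 3)) ^ 2 * (l / (2 * N)) ^ 2))
      ≤ 488 * cH * (30 * N ^ 5 * h / ((l / (20 * N ^ 3)) ^ 3 * (l / (2 * N)))
        + 24 * N ^ 3 * h / ((l / (20 * N ^ 3)) ^ 2 * (l / (2 * N)) ^ 2)) := by gcongr
    _ = 488 * cH * (480000 * N ^ 15 + 38400 * N ^ 11) * h / l ^ 4 := by field_simp; ring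
    _ ≤ _ := by
      gcongr
      have : N ^ 11 ≤ N ^ 15 := pow_le_pow_right₀ hN (by norm_num)
      nlinarith [pow_pos hN0 15]



lemma lintegral_cauchy (m c : ℝ) (hm : 0 < m) :
    ∫⁻ v : ℝ, ENNReal.ofReal (1 / (m ^ 2 + (v - c) ^ 2)) = ENNReal.ofReal (π / m) := by
  have h0 : ∫⁻ v : ℝ, ENNReal.ofReal ((1 + v ^ 2)⁻¹) = ENNReal.ofReal π := by
    rw [← ofReal_integral_eq_lintegral_ofReal integrable_inv_one_add_sq
      (Eventually.of_forall fun x => by positivity), integral_univ_inv_one_add_sq]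
  have h1 := lintegral_affine1 (fun v => ENNReal.ofReal ((1 + v ^ 2)⁻¹)) (by fun_prop) (-(c / m)) m⁻¹
    (by positivity)
  rw [h0, inv_inv, ← ENNReal.ofReal_mul hm.le] at h1
  have h2 : ∀ v : ℝ, ENNReal.ofReal (1 / (m ^ 2 + (v - c) ^ 2))
      = ENNReal.ofReal ((m ^ 2)⁻¹) * ENNReal.ofReal ((1 + (-(c / m) + m⁻¹ * v) ^ 2)⁻¹) := by
    intro v
    rw [← ENNReal.ofReal_mul (by positivity)]
    congr 1
    rw [← mul_inv, one_div]
    congr 1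
    field_simp; ring
  simp_rw [h2]
  rw [lintegral_const_mul _ (by fun_prop), h1, ← ENNReal.ofReal_mul (by positivity)]
  congr 1; field_simp

lemma lintegral_prodform (T : ℝ) (g : ℝ → ℝ≥0∞) (hg : Measurable g) :
    ∫⁻ v : ℝ, ∫⁻ q in Ioi (0:ℝ), (Iic T).indicator (fun _ => g v) q
      = ENNReal.ofReal T * ∫⁻ v, g v := by
  have : ∀ v : ℝ, ∫⁻ q in Ioi (0:ℝ), (Iic T).indicator (fun _ => g v) q
      = ENNReal.ofReal T * g v := by
    intro v
    rw [lintegral_indicator_const measurableSet_Iic, Measure.restrict_apply measurableSet_Iic,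
      Set.inter_comm, Set.Ioi_inter_Iic, Real.volume_Ioc, sub_zero, mul_comm]
  simp_rw [this]
  rw [lintegral_const_mul _ hg]

lemma lintegral_inv_sq {M : ℝ} (hM : 0 < M) (c : ℝ) (hc : 0 ≤ c) :
    ∫⁻ v : ℝ, (Iic (-M)).indicator (fun v => ENNReal.ofReal (c / v ^ 2)) v = ENNReal.ofReal (c / M) := by
  have h := lintegral_Ioi_ftc (g := fun x => -(c / x)) (g' := fun x => c / x ^ 2) (a := M) (l := 0)
    ?_ ?_ ?_ ?_
  · rw [show (0:ℝ) - -(c / M) = c / M by ring] at h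
    rw [← h, lintegral_indicator measurableSet_Iic, ← restrict_Ioi_eq_restrict_Ici.symm]
    have e := (Measure.measurePreserving_neg (volume : Measure ℝ)).setLIntegral_comp_preimage_emb
      (MeasurableEquiv.neg ℝ).measurableEmbedding (fun v => ENNReal.ofReal (c / v ^ 2)) (Iic (-M))
    rw [← e]
    simp
  · apply ContinuousAt.continuousWithinAt
    fun_prop (disch := exact hM.ne')
  · intro x hx
    have hx0 : x ≠ 0 := (hM.trans hx).ne'
    have := ((hasDerivAt_inv hx0).const_mul c).neg
    exact this.congr_deriv (by field_simp)
  · intro x hx; positivity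
  · have := (tendsto_inv_atTop_zero (𝕜 := ℝ)).const_mul c
    simpa [div_eq_mul_inv] using this.neg

lemma lintegral_exp_tail {M : ℝ} (c : ℝ) (hc : 0 ≤ c) :
    ∫⁻ v : ℝ, (Ici M).indicator (fun v => ENNReal.ofReal (c * Real.exp (-(2 * v)))) v
      = ENNReal.ofReal (c / 2 * Real.exp (-(2 * M))) := by
  have h := lintegral_Ioi_ftc (g := fun x => -(c / 2 * Real.exp (-(2 * x))))
    (g' := fun x => c * Real.exp (-(2 * x))) (a := M) (l := 0) ?_ ?_ ?_ ?_
  · rw [lintegral_indicator measurableSet_Ici, ← restrict_Ioi_eq_restrict_Ici, h]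
    congr 1; ring
  · apply ContinuousAt.continuousWithinAt
    fun_prop
  · intro x hx
    have h1 : HasDerivAt (fun x : ℝ => -(2 * x)) (-(2 * 1)) x := ((hasDerivAt_id x).const_mul 2).neg
    have := (h1.exp.const_mul (c/2)).neg
    exact this.congr_deriv (by ring)
  · intro x hx; positivity
  · have h1 : Tendsto (fun x : ℝ => -(2 * x)) atTop atBot :=
      tendsto_neg_atTop_atBot.comp (tendsto_id.const_mul_atTop two_pos)
    have := (Real.tendsto_exp_atBot.comp h1).const_mul (c/2)
    simpa using this.neg

lemma lintegral_inv_log {T : ℝ} (hT : 1 < T) :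
    ∫⁻ q in Ioi T, ENNReal.ofReal (1 / (q * Real.log q ^ 2)) = ENNReal.ofReal (1 / Real.log T) := by
  have hl : 0 < Real.log T := Real.log_pos hT
  have h := lintegral_Ioi_ftc (g := fun x => -(Real.log x)⁻¹)
    (g' := fun q => 1 / (q * Real.log q ^ 2)) (a := T) (l := 0) ?_ ?_ ?_ ?_
  · rw [h]; congr 1; rw [one_div]; ring
  · apply ContinuousAt.continuousWithinAt
    have : T ≠ 0 := by positivity
    fun_prop (disch := first | exact hl.ne' | assumption)
  · intro x hx
    have hx1 : 1 < x := hT.trans hx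
    have hlx : 0 < Real.log x := Real.log_pos hx1
    have := ((Real.hasDerivAt_log (by positivity : x ≠ 0)).inv hlx.ne').neg
    exact this.congr_deriv (by field_simp)
  · intro x hx
    have hx1 : 1 < x := hT.trans hx
    positivity
  · simpa using (tendsto_inv_atTop_zero.comp Real.tendsto_log_atTop).neg

lemma lintegral_inv_cube {T : ℝ} (hT : 0 < T) :
    ∫⁻ q in Ioi T, ENNReal.ofReal (1 / (√q) ^ 3) = ENNReal.ofReal (2 / √T) := by
  have h := lintegral_Ioi_ftc (g := fun x => -(2 * (√x)⁻¹))
    (g' := fun q => 1 / (√q) ^ 3) (a := T) (l := 0) ?_ ?_ ?_ ?_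
  · rw [h]; congr 1; ring
  · apply ContinuousAt.continuousWithinAt
    have : √T ≠ 0 := by positivity
    fun_prop (disch := assumption)
  · intro x hx
    have hx1 : 0 < x := hT.trans hx
    have hs : √x ≠ 0 := by positivity
    have := (((Real.hasDerivAt_sqrt hx1.ne').inv hs).const_mul 2).neg
    exact this.congr_deriv (by field_simp)
  · intro x hx; positivity
  · simpa using ((tendsto_inv_atTop_zero.comp Real.tendsto_sqrt_atTop).const_mul 2).neg

lemma lintegral_inv_sq_shift {m : ℝ} (hm : 0 < m) :
    ∫⁻ q in Ioi (0:ℝ), ENNReal.ofReal (1 / (m + q) ^ 2) = ENNReal.ofReal (1 / m) := by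
  have h := lintegral_Ioi_ftc (g := fun x => -(m + x)⁻¹)
    (g' := fun q => 1 / (m + q) ^ 2) (a := 0) (l := 0) ?_ ?_ ?_ ?_
  · rw [h]; congr 1; simp
  · apply ContinuousAt.continuousWithinAt
    have : m + 0 ≠ 0 := by positivity
    fun_prop (disch := assumption)
  · intro x hx
    have hx1 : (0:ℝ) < x := hx
    have := (((hasDerivAt_id x).const_add m).inv (by simp; positivity)).neg
    exact this.congr_deriv (by simp [neg_div])
  · intro x hx; positivity
  · have h1 : Tendsto (fun x : ℝ => m + x) atTop atTop := tendsto_atTop_add_const_left _ _ tendsto_id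
    simpa using (tendsto_inv_atTop_zero.comp h1).neg



def F0 (T M c : ℝ) (q v : ℝ) : ℝ≥0∞ :=
  (Iic T).indicator (fun _ => (Icc (-M) M).indicator (fun _ => ENNReal.ofReal c) v) q

def F1 (T M c : ℝ) (q v : ℝ) : ℝ≥0∞ :=
  (Iic T).indicator (fun _ => (Iic (-M)).indicator (fun v => ENNReal.ofReal (c / v ^ 2)) v) q

def F2 (T M c : ℝ) (q v : ℝ) : ℝ≥0∞ :=
  (Iic T).indicator (fun _ => (Ici M).indicator
    (fun v => ENNReal.ofReal (c * Real.exp (-(2 * v)))) v) q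

def F3 (T c1 c2 : ℝ) (q v : ℝ) : ℝ≥0∞ :=
  (Ioi T).indicator (fun q => ENNReal.ofReal (1 / ((Real.log √q) ^ 2 / 4 + (v - Real.log √q) ^ 2) *
        (c1 / (Real.log √q * √q ^ 2) + c2 / √q ^ 3))) q

def F4 (r c : ℝ) (q v : ℝ) : ℝ≥0∞ := ENNReal.ofReal (c * r / (r ^ 2 + v ^ 2 + q) ^ 2)

lemma measurable_F0 (T M c : ℝ) : Measurable (Function.uncurry (F0 T M c)) := by
  have : Function.uncurry (F0 T M c) =
      ({p : ℝ × ℝ | p.1 ≤ T} ∩ ({p : ℝ × ℝ | -M ≤ p.2} ∩ {p : ℝ × ℝ | p.2 ≤ M})).indicator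
        (fun _ => ENNReal.ofReal c) := by
    ext p
    simp only [Function.uncurry, F0, indicator, mem_Iic, mem_Icc, mem_inter_iff, mem_ofPred_eq]
    split_ifs <;> simp_all
  rw [this]
  exact measurable_const.indicator ((measurableSet_le (by fun_prop) (by fun_prop)).inter
    ((measurableSet_le (by fun_prop) (by fun_prop)).inter (measurableSet_le (by fun_prop) (by fun_prop))))

lemma measurable_F1 (T M c : ℝ) : Measurable (Function.uncurry (F1 T M c)) := by
  have : Function.uncurry (F1 T M c) =
      ({p : ℝ × ℝ | p.1 ≤ T} ∩ {p : ℝ × ℝ | p.2 ≤ -M}).indicator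
        (fun p => ENNReal.ofReal (c / p.2 ^ 2)) := by
    ext p
    simp only [Function.uncurry, F1, indicator, mem_Iic, mem_Icc, mem_inter_iff, mem_ofPred_eq]
    split_ifs <;> simp_all
  rw [this]
  exact Measurable.indicator (by fun_prop) ((measurableSet_le (by fun_prop) (by fun_prop)).inter
    ((measurableSet_le (by fun_prop) (by fun_prop))))

lemma measurable_F2 (T M c : ℝ) : Measurable (Function.uncurry (F2 T M c)) := by
  have : Function.uncurry (F2 T M c) =
      ({p : ℝ × ℝ | p.1 ≤ T} ∩ {p : ℝ × ℝ | M ≤ p.2}).indicator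
        (fun p => ENNReal.ofReal (c * Real.exp (-(2 * p.2)))) := by
    ext p
    simp only [Function.uncurry, F2, indicator, mem_Iic, mem_Ici, mem_inter_iff, mem_ofPred_eq]
    split_ifs <;> simp_all
  rw [this]
  exact Measurable.indicator (by fun_prop) ((measurableSet_le (by fun_prop) (by fun_prop)).inter
    ((measurableSet_le (by fun_prop) (by fun_prop))))

lemma measurable_F3 (T c1 c2 : ℝ) : Measurable (Function.uncurry (F3 T c1 c2)) := by
  have : Function.uncurry (F3 T c1 c2) =
      ({p : ℝ × ℝ | T < p.1}).indicator
        (fun p => ENNReal.ofReal (1 / ((Real.log √p.1) ^ 2 / 4 + (p.2 - Real.log √p.1) ^ 2) *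
        (c1 / (Real.log √p.1 * √p.1 ^ 2) + c2 / √p.1 ^ 3))) := by
    ext p
    simp only [Function.uncurry, F3, indicator, mem_Ioi, mem_ofPred_eq]
  rw [this]
  exact Measurable.indicator (by fun_prop) (measurableSet_lt (by fun_prop) (by fun_prop))

lemma measurable_F4 (r c : ℝ) : Measurable (Function.uncurry (F4 r c)) := by
  unfold F4 Function.uncurry
  fun_prop

lemma lintegral_F0 {T M c : ℝ} (hT : 0 ≤ T) (hc : 0 ≤ c) :
    ∫⁻ v : ℝ, ∫⁻ q in Ioi (0:ℝ), F0 T M c q v = ENNReal.ofReal (T * (c * (2 * M))) := by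
  unfold F0
  rw [lintegral_prodform _ _ (measurable_const.indicator measurableSet_Icc),
    lintegral_indicator_const measurableSet_Icc, Real.volume_Icc, ← ENNReal.ofReal_mul hc,
    ← ENNReal.ofReal_mul hT]
  congr 1; ring

lemma lintegral_F1 {T M c : ℝ} (hT : 0 ≤ T) (hM : 0 < M) (hc : 0 ≤ c) :
    ∫⁻ v : ℝ, ∫⁻ q in Ioi (0:ℝ), F1 T M c q v = ENNReal.ofReal (T * (c / M)) := by
  unfold F1
  rw [lintegral_prodform _ _ (Measurable.indicator (by fun_prop) measurableSet_Iic),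
    lintegral_inv_sq hM c hc, ← ENNReal.ofReal_mul hT]

lemma lintegral_F2 {T M c : ℝ} (hT : 0 ≤ T) (hc : 0 ≤ c) :
    ∫⁻ v : ℝ, ∫⁻ q in Ioi (0:ℝ), F2 T M c q v
      = ENNReal.ofReal (T * (c / 2 * Real.exp (-(2 * M)))) := by
  unfold F2
  rw [lintegral_prodform _ _ (Measurable.indicator (by fun_prop) measurableSet_Ici),
    lintegral_exp_tail c hc, ← ENNReal.ofReal_mul hT]

lemma lintegral_F4 {r c : ℝ} (hr : 0 < r) (hc : 0 ≤ c) :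
    ∫⁻ v : ℝ, ∫⁻ q in Ioi (0:ℝ), F4 r c q v = ENNReal.ofReal (c * π) := by
  unfold F4
  have h1 : ∀ v : ℝ, ∫⁻ q in Ioi (0:ℝ), ENNReal.ofReal (c * r / (r ^ 2 + v ^ 2 + q) ^ 2)
      = ENNReal.ofReal (c * r) * ENNReal.ofReal (1 / (r ^ 2 + (v - 0) ^ 2)) := by
    intro v
    have hm : 0 < r ^ 2 + v ^ 2 := by positivity
    rw [sub_zero, ← lintegral_inv_sq_shift hm, ← lintegral_const_mul _ (by fun_prop)]
    refine lintegral_congr fun q => ?_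
    rw [← ENNReal.ofReal_mul (by positivity)]
    congr 1; ring
  simp_rw [h1]
  rw [lintegral_const_mul _ (by fun_prop), lintegral_cauchy r 0 hr, ← ENNReal.ofReal_mul (by positivity)]
  congr 1; field_simp

lemma lintegral_F3 {T c1 c2 : ℝ} (hT : Real.exp 2 ≤ T) (hc1 : 0 ≤ c1) (hc2 : 0 ≤ c2) :
    ∫⁻ v : ℝ, ∫⁻ q in Ioi (0:ℝ), F3 T c1 c2 q v
      ≤ ENNReal.ofReal (8 * π * c1 / Real.log T + 4 * π * c2 / √T) := by
  have hT0 : 0 < T := (Real.exp_pos _).trans_le hT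
  have hT1 : 1 < T := lt_of_lt_of_le (Real.one_lt_exp_iff.2 (by norm_num)) hT
  have hlT : 0 < Real.log T := Real.log_pos hT1
  rw [lintegral_lintegral_swap]
  swap
  · exact ((measurable_F3 T c1 c2).comp measurable_swap).aemeasurable
  have h1 : ∀ q : ℝ, ∫⁻ v : ℝ, F3 T c1 c2 q v ≤ (Ioi T).indicator (fun q =>
      ENNReal.ofReal (8 * π * c1) * ENNReal.ofReal (1 / (q * Real.log q ^ 2))
        + ENNReal.ofReal (2 * π * c2) * ENNReal.ofReal (1 / √q ^ 3)) q := by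
    intro q
    unfold F3
    by_cases hq : q ∈ Ioi T
    · simp only [indicator_of_mem hq]
      have hq0 : 0 < q := hT0.trans hq
      have hp : 1 ≤ Real.log √q := by
        rw [Real.log_sqrt hq0.le, le_div_iff₀ two_pos, one_mul, Real.le_log_iff_exp_le hq0]
        exact hT.trans (le_of_lt hq)
      have hlq : Real.log q = 2 * Real.log √q := by rw [Real.log_sqrt hq0.le]; ring
      set p := Real.log √q
      have hs : 0 < √q := by positivity
      have hsq : √q ^ 2 = q := Real.sq_sqrt hq0.le
      have hp0 : 0 < p := by linarith
      have e : ∀ v : ℝ, ENNReal.ofReal (1 / (p ^ 2 / 4 + (v - p) ^ 2) * (c1 / (p * √q ^ 2) + c2 / √q ^ 3))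
          = ENNReal.ofReal (c1 / (p * √q ^ 2) + c2 / √q ^ 3) *
            ENNReal.ofReal (1 / ((p / 2) ^ 2 + (v - p) ^ 2)) := by
        intro v
        rw [← ENNReal.ofReal_mul (by positivity)]
        congr 1; ring
      simp_rw [e]
      rw [lintegral_const_mul _ (by fun_prop), lintegral_cauchy _ _ (by positivity),
        ← ENNReal.ofReal_mul (by positivity), ← ENNReal.ofReal_mul (by positivity),
        ← ENNReal.ofReal_mul (by positivity), ← ENNReal.ofReal_add (by positivity) (by positivity)]
      apply ENNReal.ofReal_le_ofReal
      rw [hlq, hsq, add_mul]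
      apply add_le_add
      · apply le_of_eq; field_simp; ring
      · have : π / (p / 2) ≤ 2 * π := by
          rw [div_le_iff₀ (by positivity)]; nlinarith [Real.pi_pos]
        calc c2 / √q ^ 3 * (π / (p / 2)) ≤ c2 / √q ^ 3 * (2 * π) := by gcongr
          _ = _ := by ring
    · simp only [indicator_of_notMem hq]
      simp
  calc ∫⁻ q in Ioi (0:ℝ), ∫⁻ v : ℝ, F3 T c1 c2 q v
      ≤ ∫⁻ q, ∫⁻ v : ℝ, F3 T c1 c2 q v := setLIntegral_le_lintegral _ _
    _ ≤ _ := lintegral_mono h1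
    _ = _ := by
      rw [lintegral_indicator measurableSet_Ioi, lintegral_add_left (by fun_prop),
        lintegral_const_mul _ (by fun_prop), lintegral_const_mul _ (by fun_prop),
        lintegral_inv_log hT1, lintegral_inv_cube hT0, ← ENNReal.ofReal_mul (by positivity),
        ← ENNReal.ofReal_mul (by positivity), ← ENNReal.ofReal_add (by positivity) (by positivity)]
      congr 1; ring



lemma inBox_e {L r : ℝ} (hL : 0 < L) (hr : 0 < r) : InBox L r ((0, 0, 1) : G) := by
  refine ⟨by simp; positivity, by simp; positivity, ?_, ?_⟩
  · simp [hr.le]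
  · simp [hr.le]

lemma inBox_iff {L r : ℝ} (y : G) : InBox L r y ↔ y ∈ (Set.Icc (gE.1 - L/2) (gE.1 + L/2) ×ˢ
        (Set.Icc (gE.2.1 - L/2) (gE.2.1 + L/2) ×ˢ
         Set.Icc (gE.2.2 * Real.exp (-r)) (gE.2.2 * Real.exp r))) := by
  simp only [InBox, gE, mem_prod, mem_Icc, abs_le, zero_sub, zero_add, one_mul, and_assoc]

lemma atom_enorm {A : G → ℝ} {L r : ℝ} (hL : 0 < L) (hr : 0 < r) (hA : CAtom A L r) :
    ∫ y, |A y| ∂ρG ≤ 1 := by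
  set B := (Set.Icc (gE.1 - L/2) (gE.1 + L/2) ×ˢ
        (Set.Icc (gE.2.1 - L/2) (gE.2.1 + L/2) ×ˢ
         Set.Icc (gE.2.2 * Real.exp (-r)) (gE.2.2 * Real.exp r))) with hB
  have hBm : MeasurableSet B := measurableSet_Icc.prod (measurableSet_Icc.prod measurableSet_Icc)
  have hb := rho_box gE L r (by simp [gE]) hL hr
  have h0 : (0:ℝ) < 2 * r * L ^ 2 := by positivity
  have h1 : ENNReal.ofReal (∫ y, |A y| ∂ρG) ≤ ENNReal.ofReal 1 := by
    rw [ofReal_integral_eq_lintegral_ofReal hA.integrable.abs (Eventually.of_forall fun _ => abs_nonneg _)]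
    calc ∫⁻ y, ENNReal.ofReal |A y| ∂ρG
        ≤ ∫⁻ y, B.indicator (fun _ => ENNReal.ofReal (2 * r * L ^ 2)⁻¹) y ∂ρG := by
          refine lintegral_mono_ae ?_
          filter_upwards [hA.bdd] with y hy
          by_cases h : y ∈ B
          · rw [indicator_of_mem h]; exact ENNReal.ofReal_le_ofReal hy
          · rw [indicator_of_notMem h, hA.supp y (fun h' => h ((inBox_iff y).1 h'))]; simp
      _ = ENNReal.ofReal 1 := by
          rw [lintegral_indicator_const hBm, hb, ← ENNReal.ofReal_mul (by positivity)]
          congr 1; field_simp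
  exact (ENNReal.ofReal_le_ofReal_iff (by norm_num)).1 h1

lemma conv_le {A : G → ℝ} {L r : ℝ} (hL : 0 < L) (hr : 0 < r) (hA : CAtom A L r)
    {t : ℝ} (ht : 0 < t) {x : G} (hx : 0 < x.2.2) (K0 k : ℝ)
    (h : ∀ y, InBox L r y → |kerH t x.2.2 y.2.2 (hq x y) - K0| ≤ k) :
    |convHeat A t x| ≤ k := by
  have hk : 0 ≤ k := (abs_nonneg _).trans (h _ (inBox_e hL hr))
  have hi := integrable_mul_kerH A hA.integrable t ht x hx
  rw [convHeat_eq A hA.integrable.1 t x hx]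
  have e : ∫ y, A y * kerH t x.2.2 y.2.2 (hq x y) ∂ρG
      = ∫ y, A y * (kerH t x.2.2 y.2.2 (hq x y) - K0) ∂ρG := by
    simp_rw [mul_sub]
    rw [integral_sub hi (hA.integrable.mul_const K0), integral_mul_const, hA.mean, zero_mul, sub_zero]
  rw [e]
  calc |∫ y, A y * (kerH t x.2.2 y.2.2 (hq x y) - K0) ∂ρG|
      ≤ ∫ y, |A y| * k ∂ρG := by
        rw [← Real.norm_eq_abs]
        refine norm_integral_le_of_norm_le (hA.integrable.abs.mul_const k) (Eventually.of_forall fun y => ?_)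
        rw [Real.norm_eq_abs, abs_mul]
        by_cases hy : InBox L r y
        · exact mul_le_mul_of_nonneg_left (h y hy) (abs_nonneg _)
        · simp [hA.supp y hy]
    _ ≤ 1 * k := by
        rw [integral_mul_const]
        exact mul_le_mul_of_nonneg_right (atom_enorm hL hr hA) hk
    _ = k := one_mul k

lemma conv_le_lintegral {A : G → ℝ} {L r : ℝ} (hL : 0 < L) (hr : 0 < r) (hA : CAtom A L r)
    {t : ℝ} (ht : 0 < t) {x : G} (hx : 0 < x.2.2) (F : G → ℝ≥0∞) (hF : Measurable F)
    (h : ∀ y, InBox L r y → ENNReal.ofReal (kerH t x.2.2 y.2.2 (hq x y)) ≤ F y) :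
    ENNReal.ofReal |convHeat A t x| ≤ ENNReal.ofReal (2 * r * L ^ 2)⁻¹ * ∫⁻ y, F y ∂ρG := by
  rw [convHeat_eq A hA.integrable.1 t x hx, ← Real.norm_eq_abs, ofReal_norm]
  refine (enorm_integral_le_lintegral_enorm _).trans ?_
  rw [← lintegral_const_mul _ hF]
  refine lintegral_mono_ae ?_
  filter_upwards [hA.bdd, rho_ae_pos] with y hy hpos
  by_cases hyb : InBox L r y
  · rw [enorm_mul]
    refine mul_le_mul' ?_ ?_
    · rw [← ofReal_norm, Real.norm_eq_abs]; exact ENNReal.ofReal_le_ofReal hy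
    · rw [← ofReal_norm, Real.norm_eq_abs, abs_of_nonneg (kerH_nonneg ht hx hpos (hq_nonneg x y))]
      exact h y hyb
  · simp [hA.supp y hyb]

lemma conv_le_sup {A : G → ℝ} {L r : ℝ} (hL : 0 < L) (hr : 0 < r) (hA : CAtom A L r)
    {t : ℝ} (ht : 0 < t) {x : G} (hx : 0 < x.2.2) :
    ENNReal.ofReal |convHeat A t x| ≤ ENNReal.ofReal (8 * (π * √π) * cH / (2 * r * L ^ 2)) := by
  refine (conv_le_lintegral hL hr hA ht hx _ (measurable_kerH' t x).ennreal_ofReal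
    (fun y _ => le_rfl)).trans_eq ?_
  rw [lintegral_kerH t ht x hx, ← ENNReal.ofReal_mul (by positivity)]
  congr 1; field_simp

lemma lintegral_logform {ε T : ℝ} (hε : 0 < ε) (hT : 0 < T) :
    ∫⁻ q in Ioi (0:ℝ), ENNReal.ofReal (1 / (ε + q) - 1 / (ε + q + T))
      = ENNReal.ofReal (Real.log ((ε + T) / ε)) := by
  have h := lintegral_Ioi_ftc (g := fun q => Real.log (ε + q) - Real.log (ε + q + T))
    (g' := fun q => 1 / (ε + q) - 1 / (ε + q + T)) (a := 0) (l := 0) ?_ ?_ ?_ ?_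
  · rw [h]; congr 1; rw [Real.log_div (by positivity) (by positivity), add_zero]; ring
  · apply ContinuousAt.continuousWithinAt
    have h1 : ε + 0 ≠ 0 := by positivity
    have h2 : ε + 0 + T ≠ 0 := by positivity
    exact ((continuousAt_const.add continuousAt_id).log h1).sub
      (((continuousAt_const.add continuousAt_id).add continuousAt_const).log h2)
  · intro x hx
    have hx1 : (0:ℝ) < x := hx
    have h1 := ((hasDerivAt_id x).const_add ε).log (by simp; positivity)
    have h2 := (((hasDerivAt_id x).const_add ε).add_const T).log (by simp; positivity)
    exact (h1.sub h2).congr_deriv (by simp)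
  · intro x hx
    have hx1 : (0:ℝ) < x := hx
    have : 1 / (ε + x + T) ≤ 1 / (ε + x) := one_div_le_one_div_of_le (by positivity) (by linarith)
    linarith
  · have h1 : Tendsto (fun q : ℝ => T / (ε + q)) atTop (nhds 0) :=
      tendsto_const_nhds.div_atTop (tendsto_atTop_add_const_left _ _ tendsto_id)
    have h2 : Tendsto (fun q : ℝ => -Real.log (1 + T / (ε + q))) atTop (nhds 0) := by
      have := ((h1.const_add 1).log (by norm_num)).neg
      simpa using this
    refine h2.congr' ?_
    filter_upwards [eventually_gt_atTop 0] with q hq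
    have : 1 + T / (ε + q) = (ε + q + T) / (ε + q) := by field_simp
    rw [this, Real.log_div (by positivity) (by positivity)]; ring

lemma lintegral_radial_shift (F : ℝ → ℝ≥0∞) (hF : Measurable F) (u w : ℝ) :
    ∫⁻ p : ℝ × ℝ, F ((u - p.1) ^ 2 + (w - p.2) ^ 2) = ENNReal.ofReal π * ∫⁻ q in Ioi 0, F q := by
  rw [← lintegral_radial F hF]
  exact lintegral_sub_left_eq_self (fun p : ℝ × ℝ => F (p.1 ^ 2 + p.2 ^ 2)) ((u, w) : ℝ × ℝ)

/-- Improved bound on the region with very negative `log a`. -/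
lemma conv_le_log {A : G → ℝ} {L R T c ε : ℝ} (hL : 0 < L) (hR : 0 < R) (hA : CAtom A L R)
    {t : ℝ} (ht : 0 < t) {x : G} (hx : 0 < x.2.2) (hε : 0 < ε) (hT : ε ≤ T) (hc : 0 ≤ c)
    (hT' : ∀ y, InBox L R y → hq x y ≤ T)
    (h : ∀ y, InBox L R y → kerH t x.2.2 y.2.2 (hq x y) ≤ c / (ε + hq x y)) :
    ENNReal.ofReal |convHeat A t x| ≤
      ENNReal.ofReal (3 * π * c * Real.log ((ε + T) / ε) / L ^ 2) := by
  have hT0 : 0 < T := hε.trans_le hT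
  set f : ℝ → ℝ≥0∞ := fun q => ENNReal.ofReal (1 / (ε + q) - 1 / (ε + q + T)) with hf
  have hfm : Measurable f := by rw [hf]; fun_prop
  set J : Set G := {y : G | Real.exp (-R) ≤ y.2.2} ∩ {y : G | y.2.2 ≤ Real.exp R} with hJ
  have hJm : MeasurableSet J := (measurableSet_le (by fun_prop) (by fun_prop)).inter
    (measurableSet_le (by fun_prop) (by fun_prop))
  have hFm : Measurable (J.indicator (fun y : G => ENNReal.ofReal (3 * c) * f (hq x y))) := by
    refine Measurable.indicator ?_ hJm
    have : Measurable (fun y : G => hq x y) := by unfold hq; fun_prop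
    exact (hfm.comp this).const_mul _
  have h1 := conv_le_lintegral hL hR hA ht hx _ hFm ?_
  · refine h1.trans_eq ?_
    rw [lintegral_rho _ hFm]
    have e : ∀ s : ℝ, ∫⁻ p : ℝ × ℝ, J.indicator (fun y : G => ENNReal.ofReal (3 * c) * f (hq x y))
        (p.1, p.2, Real.exp s) = (Icc (-R) R).indicator (fun _ => ENNReal.ofReal (3 * c) *
          (ENNReal.ofReal π * ENNReal.ofReal (Real.log ((ε + T) / ε)))) s := by
      intro s
      by_cases hs : s ∈ Icc (-R) R
      · rw [indicator_of_mem hs]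
        have : ∀ p : ℝ × ℝ, ((p.1, p.2, Real.exp s) : G) ∈ J := fun p =>
          ⟨Real.exp_le_exp.2 hs.1, Real.exp_le_exp.2 hs.2⟩
        simp_rw [indicator_of_mem (this _)]
        rw [← lintegral_logform hε hT0, ← lintegral_radial_shift f hfm x.1 x.2.1,
          ← lintegral_const_mul _ (by fun_prop)]
        rfl
      · rw [indicator_of_notMem hs]
        have : ∀ p : ℝ × ℝ, ((p.1, p.2, Real.exp s) : G) ∉ J := fun p hp =>
          hs ⟨Real.exp_le_exp.1 hp.1, Real.exp_le_exp.1 hp.2⟩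
        simp_rw [indicator_of_notMem (this _)]
        simp
    simp_rw [e]
    rw [lintegral_indicator_const measurableSet_Icc, Real.volume_Icc]
    have hlog : 0 ≤ Real.log ((ε + T) / ε) := Real.log_nonneg (by rw [le_div_iff₀ hε]; linarith)
    rw [← ENNReal.ofReal_mul (by positivity), ← ENNReal.ofReal_mul (by positivity),
      ← ENNReal.ofReal_mul (by positivity), ← ENNReal.ofReal_mul (by positivity)]
    congr 1; field_simp; ring
  · intro y hy
    have hyJ : y ∈ J := ⟨hy.2.2.1, hy.2.2.2⟩
    rw [indicator_of_mem hyJ, hf, ← ENNReal.ofReal_mul (by positivity)]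
    apply ENNReal.ofReal_le_ofReal
    refine (h y hy).trans ?_
    have hq0 := hq_nonneg x y
    have hqT := hT' y hy
    set q := hq x y
    have e : 1 / (ε + q) - 1 / (ε + q + T) = T / ((ε + q) * (ε + q + T)) := by
      field_simp; ring
    rw [e, div_eq_mul_one_div c, mul_comm 3 c, mul_assoc]
    gcongr
    rw [div_le_iff₀ (by positivity)]
    have : 3 * (T / ((ε + q) * (ε + q + T))) * (ε + q) = 3 * T / (ε + q + T) := by field_simp
    rw [this, le_div_iff₀ (by positivity)]
    linarith



def kap : ℝ := Real.exp 30

def k1c : ℝ := 3904 * cH * (Real.exp 18 + 240 * π)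

lemma kap_pos : 0 < kap := Real.exp_pos _

lemma kap_ge : 64 ≤ kap := by
  have h4 := four_le_exp_two
  have : Real.exp 6 = Real.exp 2 * Real.exp 2 * Real.exp 2 := by
    rw [← Real.exp_add, ← Real.exp_add]; norm_num
  have h6 : 64 ≤ Real.exp 6 := by
    rw [this]
    calc (64:ℝ) = 4 * 4 * 4 := by norm_num
      _ ≤ _ := by gcongr
  exact h6.trans (Real.exp_le_exp.2 (by norm_num))

lemma k1c_pos : 0 < k1c := by
  have := cH_pos
  unfold k1c; positivity

/-- The square of the truncation radius. -/
def Tq (L : ℝ) : ℝ := (kap * L) ^ 2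

def Ffar (R L : ℝ) (q v : ℝ) : ℝ≥0∞ :=
  F1 (Tq L) (20 * R) (k1c * R / L ^ 2) q v + (F2 (Tq L) (20 * R) (976 * cH) q v +
    F3 (Tq L) (46848 * cH * R) (7495680 * cH * L) q v)

def Cfar : ℝ := kap ^ 2 * k1c / 20 + (kap ^ 2 * (488 * cH) + (8 * π * (46848 * cH) + 4 * π * (7495680 * cH)))

lemma measurable_Ffar (R L : ℝ) : Measurable (Function.uncurry (Ffar R L)) :=
  (measurable_F1 _ _ _).add ((measurable_F2 _ _ _).add (measurable_F3 _ _ _))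

lemma lint_add (F H : ℝ → ℝ → ℝ≥0∞) (hF : Measurable (Function.uncurry F))
    (hH : Measurable (Function.uncurry H)) :
    ∫⁻ v : ℝ, ∫⁻ q in Ioi (0:ℝ), (F q v + H q v)
      = (∫⁻ v : ℝ, ∫⁻ q in Ioi (0:ℝ), F q v) + ∫⁻ v : ℝ, ∫⁻ q in Ioi (0:ℝ), H q v := by
  have h1 : ∀ v : ℝ, ∫⁻ q in Ioi (0:ℝ), (F q v + H q v)
      = (∫⁻ q in Ioi (0:ℝ), F q v) + ∫⁻ q in Ioi (0:ℝ), H q v := fun v =>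
    lintegral_add_left (hF.comp (measurable_id.prodMk measurable_const)) _
  simp_rw [h1]
  refine lintegral_add_left ?_ _
  exact Measurable.lintegral_prod_right' (f := fun p : ℝ × ℝ => F p.2 p.1) (hF.comp measurable_swap)

lemma lintegral_Ffar {R L : ℝ} (hR : 1 ≤ R) (hL : Real.exp (2 * R) ≤ L) (hL2 : L ≤ Real.exp (8 * R)) :
    ∫⁻ v : ℝ, ∫⁻ q in Ioi (0:ℝ), Ffar R L q v ≤ ENNReal.ofReal Cfar := by
  have hc := cH_pos
  have hk := kap_pos
  have hk1 := k1c_pos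
  have hL0 : 0 < L := (Real.exp_pos _).trans_le hL
  have hT0 : 0 ≤ Tq L := sq_nonneg _
  have hR0 : 0 < R := by linarith
  unfold Ffar
  rw [lint_add (F1 _ _ _) (fun q v => F2 (Tq L) (20 * R) (976 * cH) q v +
      F3 (Tq L) (46848 * cH * R) (7495680 * cH * L) q v) (measurable_F1 _ _ _)
      ((measurable_F2 _ _ _).add (measurable_F3 _ _ _)),
    lint_add (F2 _ _ _) (F3 _ _ _) (measurable_F2 _ _ _) (measurable_F3 _ _ _),
    lintegral_F1 hT0 (by positivity) (by positivity), lintegral_F2 hT0 (by positivity)]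
  have hlow : Real.exp 2 ≤ kap * L := by
    have : Real.exp 2 ≤ Real.exp (2 * R) := Real.exp_le_exp.2 (by linarith)
    have := kap_ge
    nlinarith [Real.exp_pos 2]
  have hT2 : Real.exp 2 ≤ Tq L := by
    unfold Tq
    have : 1 ≤ Real.exp 2 := Real.one_le_exp (by norm_num)
    nlinarith
  have hlogT : 4 * R ≤ Real.log (Tq L) := by
    rw [Real.le_log_iff_exp_le (by unfold Tq; positivity), Tq, mul_pow,
      show 4 * R = 2 * R + 2 * R by ring, Real.exp_add]
    have k1 : 1 ≤ kap ^ 2 := one_le_pow₀ (by linarith [kap_ge])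
    have k2 : Real.exp (2 * R) * Real.exp (2 * R) ≤ L ^ 2 := by rw [sq]; gcongr
    nlinarith [sq_nonneg L]
  refine (add_le_add le_rfl (add_le_add le_rfl (lintegral_F3 hT2 (by positivity) (by positivity)))).trans ?_
  have hlp : 0 < Real.log (Tq L) := by linarith
  rw [← ENNReal.ofReal_add (by positivity) (by positivity),
    ← ENNReal.ofReal_add (by positivity) (by positivity)]
  apply ENNReal.ofReal_le_ofReal
  unfold Cfar
  refine add_le_add ?_ (add_le_add ?_ (add_le_add ?_ ?_))
  · apply le_of_eq; unfold Tq; field_simp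
  · have : L ^ 2 * Real.exp (-(2 * (20 * R))) ≤ 1 := by
      calc L ^ 2 * Real.exp (-(2 * (20 * R))) ≤ Real.exp (8 * R) ^ 2 * Real.exp (-(2 * (20 * R))) := by gcongr
        _ = Real.exp (-(24 * R)) := by
          rw [← Real.exp_nat_mul, ← Real.exp_add]; congr 1; push_cast; ring
        _ ≤ 1 := Real.exp_le_one_iff.2 (by linarith)
    calc Tq L * (976 * cH / 2 * Real.exp (-(2 * (20 * R))))
        = kap ^ 2 * (488 * cH) * (L ^ 2 * Real.exp (-(2 * (20 * R)))) := by unfold Tq; ring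
      _ ≤ kap ^ 2 * (488 * cH) * 1 := by gcongr
      _ = _ := by ring
  · rw [div_le_iff₀ hlp]
    have : 8 * π * (46848 * cH) * R ≤ 8 * π * (46848 * cH) * Real.log (Tq L) := by
      gcongr; linarith
    linarith
  · have : √(Tq L) = kap * L := Real.sqrt_sq (by positivity)
    rw [this, div_le_iff₀ (by positivity)]
    have : 4 * π * (7495680 * cH) * (1 * L) ≤ 4 * π * (7495680 * cH) * (kap * L) := by
      gcongr; linarith [kap_ge]
    linarith

lemma F2_pt {A : G → ℝ} {L0 r0 L R : ℝ} (hL0 : 0 < L0) (hr0 : 0 < r0) (hA : CAtom A L0 r0)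
    (hR : 1 ≤ R) (hsub : ∀ y, InBox L0 r0 y → InBox L R y)
    {t : ℝ} (ht : 0 < t) {x : G} (hx : 0 < x.2.2) (hq1 : x.1 ^ 2 + x.2.1 ^ 2 ≤ Tq L)
    (hv : 20 * R ≤ Real.log x.2.2) :
    ENNReal.ofReal |convHeat A t x| ≤
      F2 (Tq L) (20 * R) (976 * cH) (x.1 ^ 2 + x.2.1 ^ 2) (Real.log x.2.2) := by
  unfold F2
  rw [indicator_of_mem (by exact hq1), indicator_of_mem (by exact hv)]
  apply ENNReal.ofReal_le_ofReal
  refine conv_le hL0 hr0 hA ht hx 0 _ fun y hy => ?_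
  have hy' := hsub y hy
  have hb : 0 < y.2.2 := (Real.exp_pos _).trans_le hy'.2.2.1
  rw [sub_zero, abs_of_nonneg (kerH_nonneg ht hx hb (hq_nonneg x y))]
  exact omega2 ht hR hx hv hy'

lemma F3_pt {A : G → ℝ} {L0 r0 L R : ℝ} (hL0 : 0 < L0) (hr0 : 0 < r0) (hA : CAtom A L0 r0)
    (hR : 1 ≤ R) (hL : Real.exp (2 * R) ≤ L) (hsub : ∀ y, InBox L0 r0 y → InBox L R y)
    {t : ℝ} (ht : 0 < t) {x : G} (hx : 0 < x.2.2) (hq1 : Tq L < x.1 ^ 2 + x.2.1 ^ 2) :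
    ENNReal.ofReal |convHeat A t x| ≤
      F3 (Tq L) (46848 * cH * R) (7495680 * cH * L) (x.1 ^ 2 + x.2.1 ^ 2) (Real.log x.2.2) := by
  have hLp : 0 < L := (Real.exp_pos _).trans_le hL
  have hk := kap_pos
  unfold F3
  rw [indicator_of_mem (by exact hq1)]
  apply ENNReal.ofReal_le_ofReal
  set s := √(x.1 ^ 2 + x.2.1 ^ 2) with hs
  have hs2 : x.1 ^ 2 + x.2.1 ^ 2 = s ^ 2 := (Real.sq_sqrt (by positivity)).symm
  have hsL : kap * L ≤ s := by
    apply Real.le_sqrt_of_sq_le; exact hq1.le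
  refine conv_le hL0 hr0 hA ht hx (kerH t x.2.2 ((0,0,1) : G).2.2 (hq x (0,0,1))) _ fun y hy => ?_
  refine (omega3 ht hR hL kap_ge hx hsL hs2 (hsub y hy) (hsub _ (inBox_e hL0 hr0))).trans_eq ?_
  ring

lemma F1_pt_big {A : G → ℝ} {L R : ℝ} (hR : 1 ≤ R) (hL : Real.exp (2 * R) ≤ L)
    (hL2 : L ≤ Real.exp (8 * R)) (hA : CAtom A L R)
    {t : ℝ} (ht : 0 < t) {x : G} (hx : 0 < x.2.2) (hq1 : x.1 ^ 2 + x.2.1 ^ 2 ≤ Tq L)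
    (hv : Real.log x.2.2 ≤ -(20 * R)) :
    ENNReal.ofReal |convHeat A t x| ≤
      F1 (Tq L) (20 * R) (k1c * R / L ^ 2) (x.1 ^ 2 + x.2.1 ^ 2) (Real.log x.2.2) := by
  have hLp : 0 < L := (Real.exp_pos _).trans_le hL
  have hk := kap_pos
  have hc := cH_pos
  have hR0 : 0 < R := by linarith
  unfold F1
  rw [indicator_of_mem (by exact hq1), indicator_of_mem (by exact hv)]
  set v := Real.log x.2.2
  have hv2 : 0 < v ^ 2 := by nlinarith
  have hL1 : 1 ≤ L := (Real.one_le_exp (by linarith)).trans hL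
  have hT1 : 1 ≤ kap * L := by nlinarith [kap_ge]
  have hε1 : Real.exp (-(2 * R)) ≤ 1 := Real.exp_le_one_iff.2 (by linarith)
  have hTq : 1 ≤ Tq L := one_le_pow₀ hT1
  have h := conv_le_log (T := 3 * Tq L) (c := 3904 * cH / v ^ 2) (ε := Real.exp (-(2 * R))) hLp hR0 hA ht hx
    (Real.exp_pos _) (by linarith) (by positivity) ?_ ?_
  · refine h.trans (ENNReal.ofReal_le_ofReal ?_)
    have hlog : Real.log ((Real.exp (-(2 * R)) + 3 * Tq L) / Real.exp (-(2 * R))) ≤ 80 * R := by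
      rw [Real.log_le_iff_le_exp (by positivity), div_le_iff₀ (Real.exp_pos _), ← Real.exp_add]
      calc Real.exp (-(2 * R)) + 3 * Tq L ≤ 4 * Tq L := by linarith
        _ ≤ Real.exp 2 * (Real.exp 30 * Real.exp (8 * R)) ^ 2 := by
          unfold Tq kap; gcongr; exact four_le_exp_two
        _ = Real.exp (62 + 16 * R) := by
          rw [← Real.exp_add, ← Real.exp_nat_mul, ← Real.exp_add]; congr 1; push_cast; ring
        _ ≤ _ := Real.exp_le_exp.2 (by linarith)
    calc 3 * π * (3904 * cH / v ^ 2) * Real.log ((Real.exp (-(2 * R)) + 3 * Tq L) / Real.exp (-(2 * R))) / L ^ 2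
        ≤ 3 * π * (3904 * cH / v ^ 2) * (80 * R) / L ^ 2 := by gcongr
      _ = (3904 * cH * (0 + 240 * π)) * R / L ^ 2 / v ^ 2 := by ring
      _ ≤ k1c * R / L ^ 2 / v ^ 2 := by
        unfold k1c; gcongr; exact (Real.exp_pos _).le
  · intro y hy
    obtain ⟨h1, h2, -, -⟩ := hy
    have e1 : y.1 ^ 2 ≤ (L/2) ^ 2 := sq_le_sq' (abs_le.1 h1).1 (abs_le.1 h1).2
    have e2 : y.2.1 ^ 2 ≤ (L/2) ^ 2 := sq_le_sq' (abs_le.1 h2).1 (abs_le.1 h2).2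
    have e3 : L ^ 2 ≤ Tq L := by
      unfold Tq; gcongr; nlinarith [kap_ge]
    unfold hq
    nlinarith [sq_nonneg (x.1 + y.1), sq_nonneg (x.2.1 + y.2.1)]
  · intro y hy
    refine (omega1 ht hR hx hv hy).trans_eq ?_
    rw [div_div]

lemma F1_pt_small {A : G → ℝ} {L0 r0 : ℝ} (hL0 : 0 < L0) (hr0 : 0 < r0) (hA : CAtom A L0 r0)
    (hsub : ∀ y, InBox L0 r0 y → InBox (Real.exp 8) 1 y)
    {t : ℝ} (ht : 0 < t) {x : G} (hx : 0 < x.2.2) (hq1 : x.1 ^ 2 + x.2.1 ^ 2 ≤ Tq (Real.exp 8))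
    (hv : Real.log x.2.2 ≤ -(20 * 1)) :
    ENNReal.ofReal |convHeat A t x| ≤
      F1 (Tq (Real.exp 8)) (20 * 1) (k1c * 1 / (Real.exp 8) ^ 2) (x.1 ^ 2 + x.2.1 ^ 2)
        (Real.log x.2.2) := by
  have hc := cH_pos
  unfold F1
  rw [indicator_of_mem (by exact hq1), indicator_of_mem (by exact hv)]
  apply ENNReal.ofReal_le_ofReal
  refine conv_le hL0 hr0 hA ht hx 0 _ fun y hy => ?_
  have hy' := hsub y hy
  have hb : 0 < y.2.2 := (Real.exp_pos _).trans_le hy'.2.2.1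
  have hqn := hq_nonneg x y
  rw [sub_zero, abs_of_nonneg (kerH_nonneg ht hx hb hqn)]
  refine (omega1 ht le_rfl hx hv hy').trans ?_
  set v := Real.log x.2.2
  have hv2 : 0 < v ^ 2 := by nlinarith
  calc 3904 * cH / (v ^ 2 * (Real.exp (-(2 * 1)) + hq x y))
      ≤ 3904 * cH / (v ^ 2 * Real.exp (-(2 * 1))) := by gcongr; linarith
    _ = 3904 * cH * Real.exp 18 / Real.exp 8 ^ 2 / v ^ 2 := by
      have : Real.exp 18 = Real.exp 8 ^ 2 / Real.exp (-(2 * 1)) := by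
        rw [← Real.exp_nat_mul, ← Real.exp_sub]; norm_num
      rw [this]; field_simp
    _ ≤ k1c * 1 / Real.exp 8 ^ 2 / v ^ 2 := by
      rw [mul_one]; unfold k1c; gcongr
      linarith [Real.pi_pos]



def c4 : ℝ := 488 * cH * (520000 * Real.exp 40 ^ 15) * Real.exp 8 * (4 * Real.exp 80)

lemma c4_pos : 0 < c4 := by
  have := cH_pos
  unfold c4; positivity

lemma abs_sub_one_ge {a : ℝ} (ha : 0 < a) (hv : |Real.log a| ≤ 20) :
    Real.exp (-20) * |Real.log a| ≤ |a - 1| := by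
  obtain ⟨h1, h2⟩ := abs_le.1 hv
  have hae : Real.exp (Real.log a) = a := Real.exp_log ha
  have he : Real.exp (-20) ≤ 1 := Real.exp_le_one_iff.2 (by norm_num)
  rcases le_total 0 (Real.log a) with h | h
  · rw [abs_of_nonneg h]
    have := Real.add_one_le_exp (Real.log a)
    rw [hae] at this
    refine le_trans ?_ (le_abs_self _)
    nlinarith
  · rw [abs_of_nonpos h]
    have h3 := Real.add_one_le_exp (-Real.log a)
    have h4 : a * Real.exp (-Real.log a) = 1 := by
      rw [← hae, Real.log_exp, ← Real.exp_add]; simp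
    have h5 : Real.exp (-20) ≤ a := by
      rw [← hae]; exact Real.exp_le_exp.2 h1
    refine le_trans ?_ (neg_le_abs _)
    have h6 : a * (-Real.log a + 1) ≤ 1 :=
      (mul_le_mul_of_nonneg_left h3 ha.le).trans_eq h4
    nlinarith

lemma exp_sub_one_le {r b : ℝ} (hr : 0 < r) (hr1 : r < 1) (h1 : Real.exp (-r) ≤ b)
    (h2 : b ≤ Real.exp r) : (b - 1) ^ 2 ≤ 9 * r ^ 2 := by
  have h3 := Real.add_one_le_exp (-r)
  have h4 : Real.exp r * Real.exp (-r) = 1 := by rw [← Real.exp_add]; simp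
  have h5 : Real.exp r ≤ 3 := by
    have := Real.exp_le_exp.2 hr1.le
    linarith [Real.exp_one_lt_d9]
  have h6 : Real.exp r * (-r + 1) ≤ 1 :=
    (mul_le_mul_of_nonneg_left h3 (Real.exp_pos r).le).trans_eq h4
  have h7 : Real.exp r - 1 ≤ 3 * r := by nlinarith
  have h8 : |b - 1| ≤ 3 * r := abs_le.2 ⟨by linarith, by linarith⟩
  have := sq_le_sq' (abs_le.1 h8).1 (abs_le.1 h8).2
  linarith

set_option maxHeartbeats 2000000 in
lemma F4_pt {A : G → ℝ} {L r : ℝ} (hL : 0 < L) (hr : 0 < r) (hr1 : r < 1)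
    (hLr : Real.exp 2 * r ≤ L) (hLr2 : L ≤ Real.exp 8 * r) (hA : CAtom A L r)
    {t : ℝ} (ht : 0 < t) {x : G} (hx : 0 < x.2.2)
    (hq1 : x.1 ^ 2 + x.2.1 ^ 2 ≤ Tq (Real.exp 8)) (hv : |Real.log x.2.2| ≤ 20)
    (hfar : Tq L < x.1 ^ 2 + x.2.1 ^ 2 ∨ kap * r < |Real.log x.2.2|) :
    ENNReal.ofReal |convHeat A t x| ≤ F4 r c4 (x.1 ^ 2 + x.2.1 ^ 2) (Real.log x.2.2) := by
  have hc := cH_pos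
  unfold F4
  apply ENNReal.ofReal_le_ofReal
  refine conv_le hL hr hA ht hx (kerH t x.2.2 1 (x.1 ^ 2 + x.2.1 ^ 2)) _ fun y hy => ?_
  obtain ⟨hy1, hy2, hy3, hy4⟩ := hy
  have hb : 0 < y.2.2 := (Real.exp_pos _).trans_le hy3
  set q := x.1 ^ 2 + x.2.1 ^ 2 with hq
  set v := Real.log x.2.2 with hvd
  set a := x.2.2 with hadef
  set b := y.2.2 with hbdef
  have hq0 : 0 ≤ q := by positivity
  obtain ⟨hv1, hv2⟩ := abs_le.1 hv
  have hae : Real.exp v = a := Real.exp_log hx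
  have ha20 : a ≤ Real.exp 20 := by rw [← hae]; exact Real.exp_le_exp.2 hv2
  have ha20' : Real.exp (-20) ≤ a := by rw [← hae]; exact Real.exp_le_exp.2 hv1
  have hav := abs_sub_one_ge hx hv
  -- lower bound on the distance
  have hav2 : Real.exp (-40) * v ^ 2 ≤ (a - 1) ^ 2 := by
    have := pow_le_pow_left₀ (by positivity) hav 2
    rw [mul_pow, sq_abs, sq_abs, ← Real.exp_nat_mul] at this
    norm_num at this
    exact this
  have he40 : Real.exp (-40) ≤ 1 := Real.exp_le_one_iff.2 (by norm_num)
  have hl2 : Real.exp (-40) * (q + v ^ 2) ≤ q + (a - 1) ^ 2 := by nlinarith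
  have hk60 : kap ^ 2 = Real.exp 60 := by
    unfold kap; rw [← Real.exp_nat_mul]; norm_num
  have hS : Real.exp 60 * r ^ 2 ≤ q + v ^ 2 := by
    rw [← hk60]
    rcases hfar with h | h
    · have h2 : (kap * r) ^ 2 ≤ Tq L := by
        unfold Tq
        have hrL : r ≤ L := by
          have := four_le_exp_two
          nlinarith
        have := kap_pos
        gcongr
      nlinarith [sq_nonneg v]
    · have := kap_pos
      have h2 := pow_le_pow_left₀ (by positivity) h.le 2
      rw [sq_abs] at h2
      nlinarith
  have hSr : r ^ 2 ≤ q + v ^ 2 := by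
    have : 1 ≤ Real.exp 60 := Real.one_le_exp (by norm_num)
    nlinarith [sq_nonneg r]
  set l := √(q + (a - 1) ^ 2) with hl
  have hll : l ^ 2 = q + (a - 1) ^ 2 := Real.sq_sqrt (by positivity)
  have hl0 : 0 ≤ l := Real.sqrt_nonneg _
  have hl20 : (Real.exp 10 * r) ^ 2 ≤ q + (a - 1) ^ 2 := by
    have h1 : Real.exp (-40) * (Real.exp 60 * r ^ 2) ≤ Real.exp (-40) * (q + v ^ 2) := by gcongr
    have h2 : Real.exp (-40) * (Real.exp 60 * r ^ 2) = (Real.exp 10 * r) ^ 2 := by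
      rw [mul_pow, ← mul_assoc, ← Real.exp_add, ← Real.exp_nat_mul]; norm_num
    linarith
  have hl10 : Real.exp 10 * r ≤ l := Real.le_sqrt_of_sq_le hl20
  have hlpos : 0 < l := lt_of_lt_of_le (by positivity) hl10
  have hN : Real.exp 20 * Real.exp 20 = Real.exp 40 := by rw [← Real.exp_add]; norm_num
  have hl40 : l ≤ Real.exp 40 := by
    apply Real.sqrt_le_iff.2 ⟨(Real.exp_pos _).le, ?_⟩
    have h1 : (a - 1) ^ 2 ≤ Real.exp 20 ^ 2 := by
      have : 1 ≤ Real.exp 20 := Real.one_le_exp (by norm_num)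
      apply sq_le_sq' <;> linarith
    have h2 : Tq (Real.exp 8) = Real.exp 76 := by
      unfold Tq kap; rw [← Real.exp_add, ← Real.exp_nat_mul]; norm_num
    have h3 : Real.exp 20 ^ 2 ≤ Real.exp 76 := by
      rw [← Real.exp_nat_mul]; exact Real.exp_le_exp.2 (by norm_num)
    have h4 : Real.exp 40 ^ 2 = Real.exp 76 * (Real.exp 2 * Real.exp 2) := by
      rw [← Real.exp_nat_mul, ← Real.exp_add, ← Real.exp_add]; norm_num
    have h5 : 4 * 4 ≤ Real.exp 2 * Real.exp 2 := by
      have := four_le_exp_two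
      gcongr
    nlinarith [Real.exp_pos 76]
  have h88 : Real.exp 10 = Real.exp 8 * Real.exp 2 := by rw [← Real.exp_add]; norm_num
  have hyh : y.1 ^ 2 + y.2.1 ^ 2 + (b - 1) ^ 2 ≤ (Real.exp 8 * r) ^ 2 := by
    have h1 := exp_sub_one_le hr hr1 hy3 hy4
    have h2 : y.1 ^ 2 ≤ (L / 2) ^ 2 := sq_le_sq' (abs_le.1 hy1).1 (abs_le.1 hy1).2
    have h3 : y.2.1 ^ 2 ≤ (L / 2) ^ 2 := sq_le_sq' (abs_le.1 hy2).1 (abs_le.1 hy2).2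
    have h4 : L ^ 2 ≤ (Real.exp 8 * r) ^ 2 := by gcongr
    have h5 : 64 ≤ Real.exp 8 := by
      have e : Real.exp 8 = Real.exp 2 * Real.exp 2 * (Real.exp 2 * Real.exp 2) := by
        rw [← Real.exp_add, ← Real.exp_add]; norm_num
      have := four_le_exp_two
      rw [e]
      calc (64:ℝ) ≤ 4 * 4 * (4 * 4) := by norm_num
        _ ≤ _ := by gcongr
    have h6 : (64 * r) ^ 2 ≤ (Real.exp 8 * r) ^ 2 := by gcongr
    nlinarith [sq_nonneg r]
  have hhl : 4 * (Real.exp 8 * r) ≤ l := by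
    have := four_le_exp_two
    calc 4 * (Real.exp 8 * r) ≤ Real.exp 2 * (Real.exp 8 * r) := by gcongr
      _ = Real.exp 10 * r := by rw [h88]; ring
      _ ≤ l := hl10
  have hlogb : |Real.log b| ≤ Real.exp 8 * r := by
    have h1 : |Real.log b| ≤ r := abs_le.2
      ⟨(Real.le_log_iff_exp_le hb).2 hy3, (Real.log_le_iff_le_exp hb).2 hy4⟩
    have : 1 ≤ Real.exp 8 := Real.one_le_exp (by norm_num)
    nlinarith
  have hkey := near_pure (t := t) (a := a) (b := b) (x1 := x.1) (x2 := x.2.1) (y1 := y.1)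
    (y2 := y.2.1) (l := l) (h := Real.exp 8 * r) (N := Real.exp 40) ht hx hb
    (Real.one_le_exp (by norm_num)) hlpos (by positivity)
    (ha20.trans (Real.exp_le_exp.2 (by norm_num)))
    (hy4.trans (Real.exp_le_exp.2 (by linarith))) (by
      calc (1:ℝ) ≤ Real.exp 40 * Real.exp (-20) := by
            rw [← Real.exp_add]; exact Real.one_le_exp (by norm_num)
        _ ≤ _ := by gcongr)
    hl40 hll.symm hyh hhl hlogb
  refine hkey.trans ?_
  have hS0 : 0 < r ^ 2 + v ^ 2 + q := by positivity
  have hl4 : (r ^ 2 + v ^ 2 + q) ^ 2 ≤ 4 * Real.exp 80 * l ^ 4 := by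
    have h1 : r ^ 2 + v ^ 2 + q ≤ 2 * Real.exp 40 * l ^ 2 := by
      have h2 : Real.exp 40 * Real.exp (-40) = 1 := by rw [← Real.exp_add]; simp
      have h3 : Real.exp 40 * (Real.exp (-40) * (q + v ^ 2)) ≤ Real.exp 40 * l ^ 2 := by
        rw [hll]; gcongr
      rw [← mul_assoc, h2] at h3
      linarith
    have h4 := pow_le_pow_left₀ hS0.le h1 2
    have h5 : (2 * Real.exp 40 * l ^ 2) ^ 2 = 4 * Real.exp 80 * l ^ 4 := by
      have : Real.exp 80 = Real.exp 40 ^ 2 := by rw [← Real.exp_nat_mul]; norm_num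
      rw [this]; ring
    rwa [h5] at h4
  rw [div_le_div_iff₀ (by positivity) (by positivity)]
  have hK : 0 ≤ 488 * cH * (520000 * Real.exp 40 ^ 15) * (Real.exp 8 * r) := by positivity
  calc _ ≤ 488 * cH * (520000 * Real.exp 40 ^ 15) * (Real.exp 8 * r) * (4 * Real.exp 80 * l ^ 4) :=
        mul_le_mul_of_nonneg_left hl4 hK
    _ = c4 * r * l ^ 4 := by unfold c4; ring

def C0 : ℝ := kap ^ 3 * (8 * (π * √π) * cH)

lemma C0_pos : 0 < C0 := by
  have := cH_pos
  have := kap_pos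
  unfold C0; positivity

lemma lintegral_F0' {L r : ℝ} (hL : 0 < L) (hr : 0 < r) :
    ∫⁻ v : ℝ, ∫⁻ q in Ioi (0:ℝ), F0 (Tq L) (kap * r) (8 * (π * √π) * cH / (2 * r * L ^ 2)) q v
      = ENNReal.ofReal C0 := by
  have := cH_pos
  rw [lintegral_F0 (show 0 ≤ Tq L from sq_nonneg _) (by positivity)]
  congr 1
  unfold Tq C0
  field_simp

lemma F0_pt {A : G → ℝ} {L r : ℝ} (hL : 0 < L) (hr : 0 < r) (hA : CAtom A L r)
    {t : ℝ} (ht : 0 < t) {x : G} (hx : 0 < x.2.2)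
    (hq1 : x.1 ^ 2 + x.2.1 ^ 2 ≤ Tq L) (hv : |Real.log x.2.2| ≤ kap * r) :
    ENNReal.ofReal |convHeat A t x| ≤
      F0 (Tq L) (kap * r) (8 * (π * √π) * cH / (2 * r * L ^ 2))
        (x.1 ^ 2 + x.2.1 ^ 2) (Real.log x.2.2) := by
  unfold F0
  rw [indicator_of_mem (by exact hq1), indicator_of_mem (by exact abs_le.1 hv)]
  exact conv_le_sup hL hr hA ht hx

def CM : ℝ := π * (C0 + (c4 * π + Cfar))

lemma Cfar_pos : 0 < Cfar := by
  have := cH_pos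
  have := kap_pos
  have := k1c_pos
  unfold Cfar; positivity

lemma CM_pos : 0 < CM := by
  have := C0_pos
  have := c4_pos
  have := Cfar_pos
  unfold CM; positivity

/-- The majorant used for all centred atoms. -/
lemma majorant (F : ℝ → ℝ → ℝ≥0∞) (hF : Measurable (Function.uncurry F)) (A : G → ℝ)
    (hpt : ∀ t : ℝ, 0 < t → ∀ x : G, 0 < x.2.2 →
      ENNReal.ofReal |convHeat A t x| ≤ F (x.1 ^ 2 + x.2.1 ^ 2) (Real.log x.2.2))
    (hInt : ∫⁻ v : ℝ, ∫⁻ q in Ioi (0:ℝ), F q v ≤ ENNReal.ofReal (C0 + (c4 * π + Cfar))) :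
    ∃ B : G → ℝ≥0∞, Measurable B ∧ (∀ x : G, 0 < x.2.2 → maxHeat A x ≤ B x) ∧
      ∫⁻ x, B x ∂ρG ≤ ENNReal.ofReal CM := by
  refine ⟨fun x => F (x.1 ^ 2 + x.2.1 ^ 2) (Real.log x.2.2), ?_, ?_, ?_⟩
  · have : Measurable fun x : G => (x.1 ^ 2 + x.2.1 ^ 2, Real.log x.2.2) := by fun_prop
    exact hF.comp this
  · intro x hx
    exact iSup₂_le fun t ht => hpt t ht x hx
  · rw [lintegral_rho_radial F hF, CM, ENNReal.ofReal_mul Real.pi_pos.le]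
    gcongr

lemma inBox_mono {L r L' r' : ℝ} (h1 : L ≤ L') (h2 : r ≤ r') (y : G) (hy : InBox L r y) :
    InBox L' r' y :=
  ⟨hy.1.trans (by linarith), hy.2.1.trans (by linarith),
    (Real.exp_le_exp.2 (by linarith)).trans hy.2.2.1,
    hy.2.2.2.trans (Real.exp_le_exp.2 h2)⟩

lemma Ffar_ge1 (R L q v : ℝ) : F1 (Tq L) (20 * R) (k1c * R / L ^ 2) q v ≤ Ffar R L q v :=
  le_self_add

lemma Ffar_ge2 (R L q v : ℝ) : F2 (Tq L) (20 * R) (976 * cH) q v ≤ Ffar R L q v :=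
  le_self_add.trans le_add_self

lemma Ffar_ge3 (R L q v : ℝ) :
    F3 (Tq L) (46848 * cH * R) (7495680 * cH * L) q v ≤ Ffar R L q v :=
  le_add_self.trans le_add_self

def Fbig (L r q v : ℝ) : ℝ≥0∞ :=
  F0 (Tq L) (kap * r) (8 * (π * √π) * cH / (2 * r * L ^ 2)) q v + Ffar r L q v

def Fsmall (L r q v : ℝ) : ℝ≥0∞ :=
  F0 (Tq L) (kap * r) (8 * (π * √π) * cH / (2 * r * L ^ 2)) q v +
    (F4 r c4 q v + Ffar 1 (Real.exp 8) q v)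

lemma measurable_Fbig (L r : ℝ) : Measurable (Function.uncurry (Fbig L r)) :=
  (measurable_F0 _ _ _).add (measurable_Ffar _ _)

lemma measurable_F4far (r : ℝ) :
    Measurable (Function.uncurry fun q v => F4 r c4 q v + Ffar 1 (Real.exp 8) q v) := by
  have h := (measurable_F4 r c4).add (measurable_Ffar 1 (Real.exp 8))
  exact h

lemma measurable_Fsmall (L r : ℝ) : Measurable (Function.uncurry (Fsmall L r)) :=
  (measurable_F0 _ _ _).add (measurable_F4far r)

lemma big_atom {A : G → ℝ} {L r : ℝ} (hL : 0 < L) (hr : 1 ≤ r) (hL1 : Real.exp (2 * r) ≤ L)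
    (hL2 : L ≤ Real.exp (8 * r)) (hA : CAtom A L r) :
    ∃ B : G → ℝ≥0∞, Measurable B ∧ (∀ x : G, 0 < x.2.2 → maxHeat A x ≤ B x) ∧
      ∫⁻ x, B x ∂ρG ≤ ENNReal.ofReal CM := by
  have hr0 : 0 < r := by linarith
  refine majorant (Fbig L r) (measurable_Fbig L r) A ?_ ?_
  · intro t ht x hx
    by_cases h1 : x.1 ^ 2 + x.2.1 ^ 2 ≤ Tq L
    · by_cases h2 : Real.log x.2.2 ≤ -(20 * r)
      · exact (F1_pt_big hr hL1 hL2 hA ht hx h1 h2).trans ((Ffar_ge1 _ _ _ _).trans le_add_self)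
      · by_cases h3 : 20 * r ≤ Real.log x.2.2
        · exact (F2_pt hL hr0 hA hr (fun y h => h) ht hx h1 h3).trans
            ((Ffar_ge2 _ _ _ _).trans le_add_self)
        · refine (F0_pt hL hr0 hA ht hx h1 ?_).trans le_self_add
          have := kap_ge
          rw [abs_le]
          constructor <;> nlinarith
    · exact (F3_pt hL hr0 hA hr hL1 (fun y h => h) ht hx (not_le.1 h1)).trans
        ((Ffar_ge3 _ _ _ _).trans le_add_self)
  · unfold Fbig
    rw [lint_add (F0 _ _ _) (Ffar _ _) (measurable_F0 _ _ _) (measurable_Ffar _ _),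
      lintegral_F0' hL hr0]
    have hc4 := c4_pos
    have h0 := C0_pos
    have hf := Cfar_pos
    refine (add_le_add le_rfl (lintegral_Ffar hr hL1 hL2)).trans ?_
    rw [← ENNReal.ofReal_add h0.le hf.le]
    apply ENNReal.ofReal_le_ofReal
    have : 0 < c4 * π := by positivity
    linarith

lemma small_atom {A : G → ℝ} {L r : ℝ} (hL : 0 < L) (hr0 : 0 < r) (hr : r < 1)
    (hL1 : Real.exp 2 * r ≤ L) (hL2 : L ≤ Real.exp 8 * r) (hA : CAtom A L r) :
    ∃ B : G → ℝ≥0∞, Measurable B ∧ (∀ x : G, 0 < x.2.2 → maxHeat A x ≤ B x) ∧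
      ∫⁻ x, B x ∂ρG ≤ ENNReal.ofReal CM := by
  have hL8 : L ≤ Real.exp 8 := by nlinarith [Real.exp_pos 8]
  have hsub : ∀ y, InBox L r y → InBox (Real.exp 8) 1 y := inBox_mono hL8 hr.le
  have h28 : Real.exp (2 * 1) ≤ Real.exp 8 := Real.exp_le_exp.2 (by norm_num)
  have h88 : Real.exp 8 ≤ Real.exp (8 * 1) := Real.exp_le_exp.2 (by norm_num)
  refine majorant (Fsmall L r) (measurable_Fsmall L r) A ?_ ?_
  · intro t ht x hx
    by_cases h1 : x.1 ^ 2 + x.2.1 ^ 2 ≤ Tq (Real.exp 8)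
    · by_cases h2 : Real.log x.2.2 ≤ -(20 * 1)
      · exact (F1_pt_small hL hr0 hA hsub ht hx h1 h2).trans
          ((Ffar_ge1 _ _ _ _).trans (le_add_self.trans le_add_self))
      · by_cases h3 : 20 * 1 ≤ Real.log x.2.2
        · exact (F2_pt hL hr0 hA le_rfl hsub ht hx h1 h3).trans
            ((Ffar_ge2 _ _ _ _).trans (le_add_self.trans le_add_self))
        · have hv : |Real.log x.2.2| ≤ 20 := by
            rw [abs_le]; constructor <;> linarith
          by_cases h4 : x.1 ^ 2 + x.2.1 ^ 2 ≤ Tq L ∧ |Real.log x.2.2| ≤ kap * r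
          · exact (F0_pt hL hr0 hA ht hx h4.1 h4.2).trans le_self_add
          · have h5 : Tq L < x.1 ^ 2 + x.2.1 ^ 2 ∨ kap * r < |Real.log x.2.2| := by
              by_contra h6
              rw [not_or, not_lt, not_lt] at h6
              exact h4 h6
            exact (F4_pt hL hr0 hr hL1 hL2 hA ht hx h1 hv h5).trans
              (le_self_add.trans le_add_self)
    · exact (F3_pt hL hr0 hA le_rfl h28 hsub ht hx (not_le.1 h1)).trans
        ((Ffar_ge3 _ _ _ _).trans (le_add_self.trans le_add_self))
  · unfold Fsmall
    rw [lint_add (F0 _ _ _) (fun q v => F4 r c4 q v + Ffar 1 (Real.exp 8) q v)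
        (measurable_F0 _ _ _) (measurable_F4far r),
      lint_add (F4 _ _) (Ffar _ _) (measurable_F4 _ _) (measurable_Ffar _ _),
      lintegral_F0' hL hr0, lintegral_F4 hr0 c4_pos.le]
    have hc4 := c4_pos
    have h0 := C0_pos
    have hf := Cfar_pos
    refine (add_le_add le_rfl (add_le_add le_rfl (lintegral_Ffar le_rfl h28 h88))).trans ?_
    rw [← ENNReal.ofReal_add (by positivity) hf.le, ← ENNReal.ofReal_add h0.le (by positivity)]

theorem final_result :
    ∃ C > (0 : ℝ), ∀ f : G → ℝ, MemH1 f →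
      ∫⁻ x, maxHeat f x ∂ρG ≤ ENNReal.ofReal (C * H1norm f) := by
  refine ⟨CM, CM_pos, fun f hf => main_of_atoms CM CM_pos (atom_reduction CM ?_) f hf⟩
  intro A L r hL hr h1 h2 hA
  rcases lt_or_ge r 1 with h | h
  · exact small_atom hL hr h (h1 h).1 (h1 h).2 hA
  · exact big_atom hL h (h2 h).1 (h2 h).2 hA



theorem heat_maximal_H1_to_L1 :
    ∃ C > (0 : ℝ), ∀ f : G → ℝ, MemH1 f →
      ∫⁻ x, maxHeat f x ∂ρG ≤ ENNReal.ofReal (C * H1norm f) := final_result
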